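/- For each c⃗ ∈ (0,1)^d with c_1+⋯+c_d=1 and each i ∈ {1,…,d}, the component ω_{c⃗,i} of the vector equilibrium measure for an Angelesco system is absolutely continuous, dω_{c⃗,i}(x)=ω′_{c⃗,i}(x)dx, its density ω′_{c⃗,i}(x) is non-vanishing on the open interval (α_{c⃗,i}, β_{c⃗,i}), and at each endpoint the density has pure square-root behavior: at β_{c⃗,i}, exactly one of the limits lim_{x↑β_{c⃗,i}} ω′_{c⃗,i}(x)·(β_{c⃗,i}−x)^{1/2} or lim_{x↑β_{c⃗,i}} ω′_{c⃗,i}(x)·(β_{c⃗,i}−x)^{−1/2} exists and is positive and finite, and the analogous claim holds at α_{c⃗,i}. -/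

import Mathlib

open MeasureTheory Set Filter Topology Polynomial

noncomputable section

/-- The arcsine distribution `dω_[a,b](x) = dx/(π √((x−a)(b−x)))` on `[a,b]`. -/
def arcsineMeasure (a b : ℝ) : Measure ℝ :=
  (volume.restrict (Set.Icc a b)).withDensity
    fun x => ENNReal.ofReal (1 / (Real.pi * Real.sqrt ((x - a) * (b - x))))

/-- The branch of `√((z−a)(z−b))` holomorphic off `[a,b]` with `w(z) = z + O(1)` at `∞`. -/
def wBranch (a b : ℝ) (z : ℂ) : ℂ :=
  (z - a) * Complex.exp ((1 / 2 : ℂ) * Complex.log ((z - b) / (z - a)))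

/-- Cauchy transform `∫ u(x)/(z−x) dω_[a,b](x)`. -/
def cauchyT (a b : ℝ) (u : ℝ → ℝ) (z : ℂ) : ℂ :=
  ∫ x, (u x : ℂ) / (z - (x : ℂ)) ∂(arcsineMeasure a b)

/-- `H_Δ u`, the harmonic extension of `u` off `Δ = [a,b]`. -/
def harmExt (a b : ℝ) (u : ℝ → ℝ) (z : ℂ) : ℝ :=
  (wBranch a b z * cauchyT a b u z).re

/-- The outer function `Ω_Δ(f,z) := exp( w_Δ(z) ∫ log f(x)/(z−x) dω_Δ(x) )`. -/
def OmegaFun (a b : ℝ) (f : ℝ → ℝ) (z : ℂ) : ℂ :=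
  Complex.exp (wBranch a b z * cauchyT a b (fun x => Real.log (f x)) z)

/-- The value of `Ω_Δ(f,·)` at infinity: `exp( ∫ log f dω_Δ )`. -/
def OmegaInf (a b : ℝ) (f : ℝ → ℝ) : ℝ :=
  Real.exp (∫ x, Real.log (f x) ∂(arcsineMeasure a b))

/-- Radon–Nikodym derivative `μ′` of `μ` with respect to Lebesgue measure. -/
def lebDeriv (μ : Measure ℝ) (x : ℝ) : ℝ := (μ.rnDeriv volume x).toReal

/-- `v_Δ(x) = π μ′(x) √((x−a)(b−x))`, the density of `μ|_Δ` w.r.t. the arcsine law. -/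
def vDens (μ : Measure ℝ) (a b : ℝ) (x : ℝ) : ℝ :=
  Real.pi * lebDeriv μ x * Real.sqrt ((x - a) * (b - x))

/-- Szegő function `G(e^h μ|_[a,b], z)`. -/
def szegoG (μ : Measure ℝ) (a b : ℝ) (h : ℝ → ℝ) (z : ℂ) : ℂ :=
  OmegaFun a b (fun x => Real.sqrt (Real.exp (h x) * vDens μ a b x)) z

/-- Szegő function `G(e^h μ|_[a,b], ·)` at infinity. -/
def szegoGInf (μ : Measure ℝ) (a b : ℝ) (h : ℝ → ℝ) : ℝ :=
  OmegaInf a b fun x => Real.sqrt (Real.exp (h x) * vDens μ a b x)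

/-- Support of a measure on `ℝ`. -/
def msupp (μ : Measure ℝ) : Set ℝ := {x | ∀ ε > 0, 0 < μ (Metric.ball x ε)}

def suppInf (μ : Measure ℝ) : ℝ := sInf (msupp μ)
def suppSup (μ : Measure ℝ) : ℝ := sSup (msupp μ)

/-- `Δ(μ)`, the convex hull of the support of `μ`. -/
def convHullSupp (μ : Measure ℝ) : Set ℝ := Set.Icc (suppInf μ) (suppSup μ)

/-- Logarithmic potential `V^ω(x) = −∫ log|x−t| dω(t)`. -/
def logPot (ω : Measure ℝ) (x : ℝ) : ℝ := -∫ t, Real.log |x - t| ∂ω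

/-- The Szegő condition `μ ∈ Sz([a,b])`. -/
def SzCond (μ : Measure ℝ) (a b : ℝ) : Prop :=
  Integrable (fun x => Real.log (lebDeriv μ x)) (arcsineMeasure a b)

/-- The increasing affine map of `[a,b]` onto `[c,d]`. -/
def affIcc (a b c d : ℝ) (x : ℝ) : ℝ := c + ((d - c) / (b - a)) * (x - a)

/-- The uniform Szegő condition `μ ∈ USz([a,b])`. -/
def USzCond (μ : Measure ℝ) (a b : ℝ) : Prop :=
  SzCond μ a b ∧
  ∀ A B : ℕ → ℝ, (∀ n, A n < B n) → (∀ n, Set.Icc (A n) (B n) ⊆ convHullSupp μ) →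
    Tendsto A atTop (𝓝 a) → Tendsto B atTop (𝓝 b) →
    (∀ᶠ n in atTop, SzCond μ (A n) (B n)) ∧
    Tendsto (fun n => ∫ x,
        |Real.log (lebDeriv μ x) - Real.log (lebDeriv μ (affIcc a b (A n) (B n) x))|
          ∂(arcsineMeasure a b)) atTop (𝓝 0)

/-- `P` is the `n`-th monic orthogonal polynomial with respect to `ν`. -/
def IsMonicOP (ν : Measure ℝ) (n : ℕ) (P : Polynomial ℝ) : Prop :=
  P.Monic ∧ P.natDegree = n ∧ ∀ k < n, ∫ x, x ^ k * P.eval x ∂ν = 0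

/-- The weighted measure `e^θ μ`. -/
def expWt (μ : Measure ℝ) (θ : ℝ → ℝ) : Measure ℝ :=
  μ.withDensity fun x => ENNReal.ofReal (Real.exp (θ x))

/-- An Angelesco system of `d` measures, with `Δ(μ_i) = [lo i, hi i]`. -/
structure Angelesco (d : ℕ) (μ : Fin d → Measure ℝ) (lo hi : Fin d → ℝ) : Prop where
  two_le : 2 ≤ d
  bounded : ∀ i, Bornology.IsBounded (msupp (μ i))
  infinite : ∀ i, (msupp (μ i)).Infinite
  lo_eq : ∀ i, lo i = suppInf (μ i)
  hi_eq : ∀ i, hi i = suppSup (μ i)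
  sep : ∀ i j, i < j → hi i < lo j

/-- The vector equilibrium measure `(ω_1,…,ω_d)` with parameter `c`,
with `supp ω_i = [A i, B i] ⊆ [lo i, hi i]` and masses `c i`. -/
structure VecEquil (d : ℕ) (lo hi : Fin d → ℝ) (c : Fin d → ℝ)
    (ω : Fin d → Measure ℝ) (A B : Fin d → ℝ) : Prop where
  endpoints : ∀ i, lo i ≤ A i ∧ A i < B i ∧ B i ≤ hi i
  supp : ∀ i, msupp (ω i) = Set.Icc (A i) (B i)
  mass : ∀ i, ω i Set.univ = ENNReal.ofReal (c i)
  equil : ∀ j, ∃ ℓ : ℝ,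
    (∀ x ∈ Set.Icc (A j) (B j), logPot (ω j) x + ∑ i, logPot (ω i) x = ℓ) ∧
    (∀ x ∈ Set.Icc (lo j) (hi j) \ Set.Icc (A j) (B j),
        ℓ < logPot (ω j) x + ∑ i, logPot (ω i) x)

/-- The vector `(S_1,…,S_d)` of conjugate-symmetric outer functions in `H²(D_{Δ_i})`,
positive at infinity, with boundary moduli `g_i` satisfying
`|S_{i±}|² ∏_{j≠i} S_j = v_i` a.e. on `Δ_i` (outer functions positive at infinity are
recovered from their boundary moduli by `S_i = Ω_{Δ_i}(g_i, ·)`). -/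
def IsSzegoVector (d : ℕ) (A B : Fin d → ℝ) (v : Fin d → ℝ → ℝ)
    (g : Fin d → ℝ → ℝ) (S : Fin d → ℂ → ℂ) : Prop :=
  (∀ i x, 0 ≤ g i x) ∧
  (∀ i, Integrable (fun x => Real.log (g i x)) (arcsineMeasure (A i) (B i))) ∧
  (∀ i, S i = fun z => OmegaFun (A i) (B i) (g i) z) ∧
  (∀ i, ∀ᵐ x ∂(arcsineMeasure (A i) (B i)),
    (g i x) ^ 2 * ∏ j ∈ Finset.univ.erase i, (S j (x : ℂ)).re = v i x)

/-- The operator `ℋ` with component `i` equal to `−(1/2) Σ_{j≠i} H_{[A j, B j]} u_j`. -/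
def calH (d : ℕ) (A B : Fin d → ℝ) (u : Fin d → ℝ → ℝ) (i : Fin d) (x : ℝ) : ℝ :=
  -(1 / 2) * ∑ j ∈ Finset.univ.erase i, harmExt (A j) (B j) (u j) (x : ℂ)

/-- sup norm over `[a,b]`. -/
def supIcc (a b : ℝ) (f : ℝ → ℝ) : ℝ := sSup ((fun x => |f x|) '' Set.Icc a b)

/-- Norm of `C(Δ⃗)`. -/
def vecCNorm (d : ℕ) (A B : Fin d → ℝ) (u : Fin d → ℝ → ℝ) : ℝ :=
  ∑ i, supIcc (A i) (B i) (u i)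

/-- Norm of `C¹(Δ⃗)`. -/
def vecC1Norm (d : ℕ) (A B : Fin d → ℝ) (u : Fin d → ℝ → ℝ) : ℝ :=
  ∑ i, (supIcc (A i) (B i) (u i) +
    supIcc (A i) (B i) (derivWithin (u i) (Set.Icc (A i) (B i))))

/-- membership in `C(Δ⃗)`. -/
def memVecC (d : ℕ) (A B : Fin d → ℝ) (u : Fin d → ℝ → ℝ) : Prop :=
  ∀ i, ContinuousOn (u i) (Set.Icc (A i) (B i))

/-- membership in `C¹(Δ⃗)`. -/
def memVecC1 (d : ℕ) (A B : Fin d → ℝ) (u : Fin d → ℝ → ℝ) : Prop :=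
  ∀ i, ContDiffOn ℝ 1 (u i) (Set.Icc (A i) (B i))

/-- `|w_Δ(x)|` for real `x`. -/
def wAbs (p q x : ℝ) : ℝ := Real.sqrt |(x - p) * (x - q)|

/-- Riemann–Liouville type fractional integral of order 1/2. -/
def fracInt (γ : ℝ) (θ : ℝ → ℝ) (x : ℝ) : ℝ :=
  (Real.sqrt Real.pi)⁻¹ * ∫ t in γ..x, θ t / Real.sqrt |x - t|



lemma ang_integral_exp_int (m : ℤ) :
    (∫ θ in (0:ℝ)..(2 * Real.pi), Complex.exp ((m * Complex.I) * θ)) =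
      if m = 0 then (2 * Real.pi : ℂ) else 0 := by
  split_ifs with h
  · subst h; simp
  · have hc : (m * Complex.I : ℂ) ≠ 0 := by
      simp [h]
    rw [integral_exp_mul_complex hc]
    have : Complex.exp ((m * Complex.I) * ((2 * Real.pi : ℝ) : ℂ)) = 1 := by
      rw [Complex.exp_eq_one_iff]
      exact ⟨m, by push_cast; ring⟩
    rw [this]; simp

lemma ang_integral_exp_cos (k n : ℕ) :
    (∫ θ in (0:ℝ)..(2 * Real.pi), Complex.exp (k * θ * Complex.I) * (Real.cos (n * θ) : ℂ)) =
      if k = n then (if n = 0 then (2 * Real.pi : ℂ) else Real.pi) else 0 := by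
  have h : ∀ θ : ℝ, Complex.exp (k * θ * Complex.I) * (Real.cos (n * θ) : ℂ) =
      (1/2) * (Complex.exp ((((k + n : ℤ) : ℂ) * Complex.I) * θ)
        + Complex.exp ((((k - n : ℤ) : ℂ) * Complex.I) * θ)) := by
    intro θ
    push_cast
    rw [Complex.cos]
    rw [show ((k:ℂ) + n) * Complex.I * θ = k * θ * Complex.I + n * θ * Complex.I by ring,
      show ((k:ℂ) - n) * Complex.I * θ = k * θ * Complex.I + -(n * θ) * Complex.I by ring,
      Complex.exp_add, Complex.exp_add]
    ring
  simp_rw [h]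
  rw [intervalIntegral.integral_const_mul, intervalIntegral.integral_add,
    ang_integral_exp_int, ang_integral_exp_int]
  · by_cases hkn : k = n
    · subst hkn
      by_cases hk : k = 0
      · subst hk; simp; ring
      · have : ¬ ((k:ℤ) + k = 0) := by omega
        simp [hk, this]
    · have h1 : ¬ ((k:ℤ) + n = 0) := by omega
      have h2 : ¬ ((k:ℤ) - n = 0) := by omega
      simp [hkn, h1, h2]
  · exact (by fun_prop : Continuous _).intervalIntegrable _ _
  · exact (by fun_prop : Continuous _).intervalIntegrable _ _

lemma ang_fourier_coeff (a : ℕ → ℂ) (ha : Summable fun k => ‖a k‖) (F : ℝ → ℂ)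
    (hF : ∀ θ : ℝ, HasSum (fun k : ℕ => a k * Complex.exp (k * θ * Complex.I)) (F θ)) (n : ℕ) :
    (∫ θ in (0:ℝ)..(2 * Real.pi), F θ * (Real.cos (n * θ) : ℂ)) =
      if n = 0 then 2 * Real.pi * a 0 else Real.pi * a n := by
  have key := intervalIntegral.hasSum_integral_of_dominated_convergence
    (μ := volume) (a := (0:ℝ)) (b := 2 * Real.pi)
    (F := fun (k : ℕ) (θ : ℝ) => a k * Complex.exp (k * θ * Complex.I) * (Real.cos (n * θ) : ℂ))
    (f := fun θ => F θ * (Real.cos (n * θ) : ℂ))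
    (bound := fun k _ => ‖a k‖) (fun k => (by fun_prop : Continuous _).aestronglyMeasurable)
    (fun k => Eventually.of_forall fun θ _ => by
      rw [norm_mul, norm_mul]
      have h1 : ‖Complex.exp (k * θ * Complex.I)‖ = 1 := by
        have := Complex.norm_exp_ofReal_mul_I (k * θ)
        push_cast at this; exact this
      have h2 : ‖(Real.cos (n * θ) : ℂ)‖ ≤ 1 := by
        rw [Complex.norm_real]; exact Real.abs_cos_le_one _
      rw [h1, mul_one]
      exact mul_le_of_le_one_right (norm_nonneg _) h2)
    (Eventually.of_forall fun θ _ => ha) (by simp)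
    (Eventually.of_forall fun θ _ => (hF θ).mul_right _)
  have h2 : ∀ k : ℕ, (∫ θ in (0:ℝ)..(2 * Real.pi),
      a k * Complex.exp (k * θ * Complex.I) * (Real.cos (n * θ) : ℂ)) =
      if k = n then (if n = 0 then (2 * Real.pi : ℂ) else Real.pi) * a n else 0 := by
    intro k
    simp_rw [mul_assoc (a k)]
    rw [intervalIntegral.integral_const_mul, ang_integral_exp_cos]
    split_ifs with h h' <;> simp [*, mul_comm]
  simp_rw [h2] at key
  rw [key.unique (hasSum_ite_eq n _)]
  split_ifs with h
  · rw [h]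
  · rfl

lemma ang_exp_pow (q : ℂ) (k : ℕ) (θ : ℝ) :
    q ^ k * Complex.exp (k * θ * Complex.I) = (q * Complex.exp (θ * Complex.I)) ^ k := by
  rw [mul_pow, ← Complex.exp_nat_mul, mul_assoc]

lemma ang_norm_q (q : ℂ) (θ : ℝ) : ‖q * Complex.exp (θ * Complex.I)‖ = ‖q‖ := by
  rw [norm_mul, Complex.norm_exp_ofReal_mul_I, mul_one]

/-- Integrability. -/
lemma ang_log_intervalIntegrable (q : ℂ) :
    IntervalIntegrable (fun θ : ℝ => Real.log ‖1 - q * Complex.exp (θ * Complex.I)‖)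
      volume 0 (2 * Real.pi) := by
  have := MeromorphicOn.circleIntegrable_log_norm (f := fun z : ℂ => 1 - q * z) (c := 0) (R := 1)
    (fun z _ => by fun_prop)
  simpa [CircleIntegrable, circleMap] using this

lemma ang_log_lt (q : ℂ) (hq : ‖q‖ < 1) (n : ℕ) :
    (∫ θ in (0:ℝ)..(2 * Real.pi),
      Real.log ‖1 - q * Complex.exp (θ * Complex.I)‖ * Real.cos (n * θ)) =
      - (Real.pi * (q ^ n).re / n) := by
  have hs : Summable fun k : ℕ => ‖q ^ k / (k:ℂ)‖ := by
    refine Summable.of_nonneg_of_le (fun _ => norm_nonneg _) (fun k => ?_)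
      (summable_geometric_of_lt_one (norm_nonneg q) hq)
    rw [norm_div, norm_pow, Complex.norm_natCast]
    rcases Nat.eq_zero_or_pos k with rfl | hk
    · simp
    · exact div_le_self (by positivity) (by exact_mod_cast hk)
  have := ang_fourier_coeff (fun k => q ^ k / (k:ℂ)) hs
    (fun θ => - Complex.log (1 - q * Complex.exp (θ * Complex.I))) (fun θ => by
      have h := Complex.hasSum_taylorSeries_neg_log
        (z := q * Complex.exp (θ * Complex.I)) (by rwa [ang_norm_q])
      convert h using 2 with k
      rw [← ang_exp_pow]; ring) n
  have hcont : Continuous fun θ : ℝ =>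
      - Complex.log (1 - q * Complex.exp (θ * Complex.I)) * (Real.cos (n * θ) : ℂ) := by
    refine Continuous.mul (Continuous.neg ?_) (by fun_prop)
    refine Continuous.clog (by fun_prop) fun θ => ?_
    refine Complex.mem_slitPlane_iff.2 (Or.inl ?_)
    have h1 := Complex.re_le_norm (q * Complex.exp (θ * Complex.I))
    rw [ang_norm_q] at h1
    simp only [Complex.sub_re, Complex.one_re]; linarith
  have hre := congrArg Complex.re this
  rw [← Complex.reCLM_apply, ← ContinuousLinearMap.intervalIntegral_comp_comm _
    (hcont.intervalIntegrable _ _)] at hre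
  have e : ∀ θ : ℝ, Complex.reCLM (- Complex.log (1 - q * Complex.exp (θ * Complex.I))
      * (Real.cos (n * θ) : ℂ)) =
      - (Real.log ‖1 - q * Complex.exp (θ * Complex.I)‖ * Real.cos (n * θ)) := by
    intro θ
    rw [Complex.reCLM_apply, Complex.re_mul_ofReal, Complex.neg_re, Complex.log_re]; ring
  simp_rw [e] at hre
  rw [intervalIntegral.integral_neg] at hre
  rw [neg_eq_iff_eq_neg.1 hre]
  split_ifs with h
  · subst h; simp
  · have : (q ^ n / (n:ℂ)) = q ^ n / ((n:ℝ) : ℂ) := by simp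
    rw [this, Complex.re_ofReal_mul, Complex.div_ofReal_re]; ring

lemma ang_log_le (q : ℂ) (hq : ‖q‖ ≤ 1) (n : ℕ) :
    (∫ θ in (0:ℝ)..(2 * Real.pi),
      Real.log ‖1 - q * Complex.exp (θ * Complex.I)‖ * Real.cos (n * θ)) =
      - (Real.pi * (q ^ n).re / n) := by
  rcases hq.lt_or_eq with h | h
  · exact ang_log_lt q h n
  set u : ℕ → ℝ := fun k => 1 - 1 / ((k:ℝ) + 1) with hu
  have hu0 : ∀ k, 0 ≤ u k := fun k => by
    have : 1 / ((k:ℝ) + 1) ≤ 1 := by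
      rw [div_le_one (by positivity)]; have := Nat.cast_nonneg (α := ℝ) k; linarith
    simp only [hu]; linarith
  have hu1 : ∀ k, u k < 1 := fun k => by
    have : 0 < 1 / ((k:ℝ) + 1) := by positivity
    simp only [hu]; linarith
  have hut : Tendsto u atTop (𝓝 1) := by
    have := (tendsto_const_nhds (x := (1:ℝ))).sub tendsto_one_div_add_atTop_nhds_zero_nat
    simpa [hu] using this
  have hz : ∀ᵐ θ : ℝ, 1 - q * Complex.exp (θ * Complex.I) ≠ 0 := by
    have hcount : {θ : ℝ | 1 - q * Complex.exp (θ * Complex.I) = 0}.Countable := by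
      have hq0 : q ≠ 0 := by intro h0; simp [h0] at h
      have : {θ : ℝ | 1 - q * Complex.exp (θ * Complex.I) = 0} ⊆
          range (fun m : ℤ => - Complex.arg q + m * (2 * Real.pi)) := by
        intro θ hθ
        simp only [mem_ofPred_eq] at hθ
        have e1 : q = Complex.exp (Complex.arg q * Complex.I) := by
          conv_lhs => rw [← Complex.norm_mul_exp_arg_mul_I q, h]
          simp
        rw [e1, ← Complex.exp_add] at hθ
        have h3 := (sub_eq_zero.1 hθ).symm
        rw [Complex.exp_eq_one_iff] at h3
        obtain ⟨m, hm⟩ := h3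
        refine ⟨m, ?_⟩
        have h4 := congrArg Complex.im hm
        simp at h4
        linarith
      exact (countable_range _).mono this
    have := hcount.measure_zero volume
    rw [ae_iff]; simpa using this
  have key := intervalIntegral.tendsto_integral_filter_of_dominated_convergence
    (μ := volume) (a := (0:ℝ)) (b := 2 * Real.pi) (l := atTop)
    (F := fun (k : ℕ) (θ : ℝ) =>
      Real.log ‖1 - ((u k : ℂ) * q) * Complex.exp (θ * Complex.I)‖ * Real.cos (n * θ))
    (f := fun θ => Real.log ‖1 - q * Complex.exp (θ * Complex.I)‖ * Real.cos (n * θ))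
    (fun θ => |Real.log ‖1 - q * Complex.exp (θ * Complex.I)‖| + 2 * Real.log 2)
    (Eventually.of_forall fun k => by
      apply Measurable.aestronglyMeasurable; fun_prop)
    (Eventually.of_forall fun k => by
      filter_upwards [hz] with θ hθ _
      rw [norm_mul]
      refine (mul_le_of_le_one_right (norm_nonneg _) (Real.abs_cos_le_one _)).trans ?_
      rw [Real.norm_eq_abs]
      set w := q * Complex.exp (θ * Complex.I) with hw
      have hw1 : ‖w‖ = 1 := by rw [hw, ang_norm_q, h]
      rw [mul_assoc, ← hw]
      have hpos : 0 < ‖1 - w‖ := norm_pos_iff.2 hθ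
      have h1 : ‖1 - w‖ ≤ 2 * ‖1 - (u k : ℂ) * w‖ := by
        have a1 : ‖1 - w‖ ≤ ‖1 - (u k : ℂ) * w‖ + (1 - u k) := by
          have : 1 - w = (1 - (u k : ℂ) * w) - ((1 - u k : ℝ) : ℂ) * w := by push_cast; ring
          rw [this]
          refine (norm_sub_le _ _).trans ?_
          rw [norm_mul, hw1, Complex.norm_real, Real.norm_eq_abs, abs_of_pos (by linarith [hu1 k])]
          simp
        have a2 : 1 - u k ≤ ‖1 - (u k : ℂ) * w‖ := by
          have := norm_sub_norm_le (1:ℂ) ((u k : ℂ) * w)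
          rw [norm_mul, hw1, Complex.norm_real, Real.norm_eq_abs, abs_of_nonneg (hu0 k)] at this
          simpa using this
        linarith
      have h2 : ‖1 - (u k : ℂ) * w‖ ≤ 2 := by
        refine (norm_sub_le _ _).trans ?_
        rw [norm_mul, hw1, Complex.norm_real, Real.norm_eq_abs, abs_of_nonneg (hu0 k)]
        have := hu1 k
        simp; linarith
      have h3 : 0 < ‖1 - (u k : ℂ) * w‖ := by linarith
      have h4 := Real.log_le_log hpos h1
      rw [Real.log_mul (by norm_num) h3.ne'] at h4
      have h5 := Real.log_le_log h3 h2
      have h6 : 0 < Real.log 2 := Real.log_pos (by norm_num)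
      rw [abs_le]
      constructor
      · have := neg_abs_le (Real.log ‖1 - w‖); linarith
      · have := abs_nonneg (Real.log ‖1 - w‖); linarith)
    ((ang_log_intervalIntegrable q).abs.add (by simp))
    (by
      filter_upwards [hz] with θ hθ _
      refine Tendsto.mul ?_ tendsto_const_nhds
      have hc : Tendsto (fun k => ‖1 - ((u k : ℂ) * q) * Complex.exp (θ * Complex.I)‖) atTop
          (𝓝 ‖1 - ((1:ℝ) * q) * Complex.exp (θ * Complex.I)‖) := by
        have hcu : Tendsto (fun k => (u k : ℂ)) atTop (𝓝 ((1:ℝ):ℂ)) :=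
          (Complex.continuous_ofReal.tendsto 1).comp hut
        exact (tendsto_const_nhds.sub ((hcu.mul_const q).mul_const _)).norm
      have := (Real.continuousAt_log (x := ‖1 - ((1:ℝ) * q) * Complex.exp (θ * Complex.I)‖)
        (by simpa using hθ)).tendsto.comp hc
      simpa [Function.comp_def] using this)
  have hv : ∀ k, (∫ θ in (0:ℝ)..(2 * Real.pi),
      Real.log ‖1 - ((u k : ℂ) * q) * Complex.exp (θ * Complex.I)‖ * Real.cos (n * θ)) =
      - (Real.pi * (u k ^ n * (q ^ n).re) / n) := by
    intro k
    rw [ang_log_lt _ _ n]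
    · rw [mul_pow, ← Complex.ofReal_pow, Complex.re_ofReal_mul]
    · rw [norm_mul, h, Complex.norm_real, Real.norm_eq_abs, abs_of_nonneg (hu0 k), mul_one]
      exact hu1 k
  simp_rw [hv] at key
  refine tendsto_nhds_unique key ?_
  have : Tendsto (fun k => - (Real.pi * (u k ^ n * (q ^ n).re) / n)) atTop
      (𝓝 (- (Real.pi * (1 ^ n * (q ^ n).re) / n))) :=
    ((((hut.pow n).mul_const _).const_mul _).div_const _).neg
  simpa using this

lemma ang_poisson (q : ℝ) (hq : |q| < 1) (n : ℕ) :
    (∫ θ in (0:ℝ)..(2 * Real.pi),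
      (1 - q ^ 2) / (1 - 2 * q * Real.cos θ + q ^ 2) * Real.cos (n * θ)) =
      2 * Real.pi * q ^ n := by
  have hq' : ‖(q:ℂ)‖ < 1 := by rwa [Complex.norm_real]
  have hs : Summable fun k : ℕ => ‖(q:ℂ) ^ k‖ := by
    simp_rw [norm_pow]
    exact summable_geometric_of_lt_one (norm_nonneg _) hq'
  have := ang_fourier_coeff (fun k => (q:ℂ) ^ k) hs
    (fun θ => (1 - q * Complex.exp (θ * Complex.I))⁻¹) (fun θ => by
      have h := hasSum_geometric_of_norm_lt_one
        (ξ := q * Complex.exp (θ * Complex.I)) (by rwa [ang_norm_q])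
      simp_rw [← ang_exp_pow] at h
      exact h) n
  have hne : ∀ θ : ℝ, 1 - (q:ℂ) * Complex.exp (θ * Complex.I) ≠ 0 := by
    intro θ h0
    have : ‖(q:ℂ) * Complex.exp (θ * Complex.I)‖ = 1 := by
      rw [← sub_eq_zero.1 h0]; simp
    rw [ang_norm_q] at this; linarith
  have hcont : Continuous fun θ : ℝ =>
      (1 - q * Complex.exp (θ * Complex.I))⁻¹ * (Real.cos (n * θ) : ℂ) :=
    Continuous.mul (Continuous.inv₀ (by fun_prop) hne) (by fun_prop)
  have hre := congrArg Complex.re this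
  rw [← Complex.reCLM_apply, ← ContinuousLinearMap.intervalIntegral_comp_comm _
    (hcont.intervalIntegrable _ _)] at hre
  have hcos := congrArg Complex.re (ang_integral_exp_cos 0 n)
  rw [← Complex.reCLM_apply, ← ContinuousLinearMap.intervalIntegral_comp_comm _
    ((by fun_prop : Continuous _).intervalIntegrable _ _)] at hcos
  have e : ∀ θ : ℝ, (1 - q ^ 2) / (1 - 2 * q * Real.cos θ + q ^ 2) * Real.cos (n * θ) =
      2 * Complex.reCLM ((1 - q * Complex.exp (θ * Complex.I))⁻¹ * (Real.cos (n * θ) : ℂ))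
       - Complex.reCLM (Complex.exp ((0:ℕ) * θ * Complex.I) * (Real.cos (n * θ) : ℂ)) := by
    intro θ
    rw [Complex.reCLM_apply, Complex.re_mul_ofReal, Complex.reCLM_apply, Complex.re_mul_ofReal,
      Complex.inv_re]
    have hns : Complex.normSq (1 - q * Complex.exp (θ * Complex.I)) =
        1 - 2 * q * Real.cos θ + q ^ 2 := by
      rw [Complex.normSq_apply]
      simp [Complex.exp_ofReal_mul_I_re, Complex.exp_ofReal_mul_I_im]
      nlinarith [Real.sin_sq_add_cos_sq θ]
    have hpos : Complex.normSq (1 - q * Complex.exp (θ * Complex.I)) ≠ 0 := by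
      simpa [Complex.normSq_eq_zero] using hne θ
    rw [hns] at hpos ⊢
    have hr : (1 - q * Complex.exp (θ * Complex.I)).re = 1 - q * Real.cos θ := by
      simp [Complex.exp_ofReal_mul_I_re]
    rw [hr]
    simp only [Nat.cast_zero, zero_mul, Complex.exp_zero, Complex.one_re]
    have h2 : 1 - q ^ 2 = 2 * (1 - q * Real.cos θ) - (1 - 2 * q * Real.cos θ + q ^ 2) := by ring
    rw [h2]
    generalize 1 - 2 * q * Real.cos θ + q ^ 2 = D at hpos
    field_simp
  simp_rw [e]
  rw [intervalIntegral.integral_sub, intervalIntegral.integral_const_mul, hre, hcos]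
  · by_cases h : n = 0
    · subst h; simp; ring
    · have h' : ¬ (0 = n) := fun h0 => h h0.symm
      simp only [h, h', if_false]
      rw [← Complex.ofReal_pow, ← Complex.ofReal_mul, Complex.ofReal_re]
      simp; ring
  · exact ((Complex.reCLM.continuous.comp hcont).const_mul _).intervalIntegrable _ _
  · exact (Complex.reCLM.continuous.comp (by fun_prop)).intervalIntegrable _ _


/-- inverse Joukowski map on the real line, with values in the closed unit disc -/
def angJ (s : ℝ) : ℂ :=
  if |s| ≤ 1 then (s : ℂ) + Real.sqrt (1 - s ^ 2) * Complex.I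
  else if 0 < s then ((s - Real.sqrt (s ^ 2 - 1) : ℝ) : ℂ) else ((s + Real.sqrt (s ^ 2 - 1) : ℝ) : ℂ)

lemma angJ_measurable : Measurable angJ := by
  unfold angJ
  refine Measurable.ite (measurableSet_le (by fun_prop) (by fun_prop)) (by fun_prop) ?_
  exact Measurable.ite (measurableSet_lt (by fun_prop) (by fun_prop)) (by fun_prop) (by fun_prop)

lemma angJ_in (s : ℝ) (hs : |s| ≤ 1) :
    angJ s = Complex.exp (Real.arccos s * Complex.I) := by
  rw [angJ, if_pos hs, Complex.exp_mul_I, ← Complex.ofReal_cos, ← Complex.ofReal_sin,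
    Real.cos_arccos (abs_le.1 hs).1 (abs_le.1 hs).2, Real.sin_arccos]

/-- Off the interval the value is real, of modulus less than one. -/
lemma angJ_out (s : ℝ) (hs : 1 < |s|) : ∃ q : ℝ, angJ s = (q : ℂ) ∧ |q| < 1 ∧ q ≠ 0 ∧
    q ^ 2 + 1 = 2 * s * q ∧ 1 - q ^ 2 = 2 * |q| * Real.sqrt (s ^ 2 - 1) ∧ 0 < q * s := by
  have h1 : 1 < s ^ 2 := by rw [← sq_abs]; nlinarith
  have hw := Real.sq_sqrt (show 0 ≤ s ^ 2 - 1 by linarith)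
  have hw0 : 0 < Real.sqrt (s ^ 2 - 1) := Real.sqrt_pos.2 (by linarith)
  rw [angJ, if_neg (not_le.2 hs)]
  set w := Real.sqrt (s ^ 2 - 1)
  split_ifs with hp
  · rw [abs_of_pos hp] at hs
    have hq : 0 < s - w := by nlinarith
    have hq1 : s - w < 1 := by nlinarith
    refine ⟨s - w, rfl, by rw [abs_of_pos hq]; exact hq1, hq.ne', by nlinarith, ?_, by positivity⟩
    rw [abs_of_pos hq]; nlinarith
  · have hn : s < 0 := by
      rcases lt_trichotomy s 0 with h | h | h
      · exact h
      · rw [h] at hs; norm_num at hs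
      · exact absurd h hp
    rw [abs_of_neg hn] at hs
    have hq : s + w < 0 := by nlinarith
    have hq1 : -1 < s + w := by nlinarith
    refine ⟨s + w, rfl, by rw [abs_of_neg hq]; linarith, hq.ne, by nlinarith, ?_,
      mul_pos_of_neg_of_neg hq hn⟩
    rw [abs_of_neg hq]; nlinarith

lemma angJ_norm_le (s : ℝ) : ‖angJ s‖ ≤ 1 := by
  rcases le_or_gt |s| 1 with h | h
  · rw [angJ_in s h, Complex.norm_exp_ofReal_mul_I]
  · obtain ⟨q, h1, h2, -⟩ := angJ_out s h
    rw [h1, Complex.norm_real]; exact h2.le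

lemma angJ_eq (s : ℝ) : angJ s ^ 2 + 1 = 2 * s * angJ s := by
  rcases le_or_gt |s| 1 with h | h
  · rw [angJ, if_pos h]
    have h1 : s ^ 2 ≤ 1 := by rw [← sq_abs]; nlinarith [abs_nonneg s]
    have hw := Real.sq_sqrt (show 0 ≤ 1 - s ^ 2 by linarith)
    have hw' : ((Real.sqrt (1 - s ^ 2) : ℝ) : ℂ) ^ 2 = 1 - (s:ℂ) ^ 2 := by
      rw [← Complex.ofReal_pow, hw]; push_cast; ring
    have : ((s : ℂ) + Real.sqrt (1 - s ^ 2) * Complex.I) ^ 2 =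
      s ^ 2 + 2 * s * (Real.sqrt (1 - s ^ 2) * Complex.I)
        + ((Real.sqrt (1 - s ^ 2) : ℝ) : ℂ) ^ 2 * Complex.I ^ 2 := by ring
    rw [this, hw', Complex.I_sq]; ring
  · obtain ⟨q, h1, -, -, h2, -⟩ := angJ_out s h
    rw [h1]; exact_mod_cast h2

lemma angJ_ne_zero (s : ℝ) : angJ s ≠ 0 := by
  intro h
  have := angJ_eq s
  simp [h] at this

lemma angJ_inv_le (s : ℝ) : 1 ≤ ‖angJ s‖ * (2 * |s| + 1) := by
  have h : (1:ℂ) = angJ s * (2 * s - angJ s) := by linear_combination angJ_eq s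
  have h2 := congrArg norm h
  rw [norm_one, norm_mul] at h2
  rw [h2]
  refine mul_le_mul_of_nonneg_left ((norm_sub_le _ _).trans ?_) (norm_nonneg _)
  have := angJ_norm_le s
  simp [Complex.norm_real]; linarith

lemma ang_zero_ae (q : ℂ) : ∀ᵐ θ : ℝ, 1 - q * Complex.exp (θ * Complex.I) ≠ 0 := by
  by_cases h : ‖q‖ = 1
  swap
  · refine Eventually.of_forall fun θ h0 => h ?_
    rw [← ang_norm_q q θ, ← sub_eq_zero.1 h0]; simp
  have hcount : {θ : ℝ | 1 - q * Complex.exp (θ * Complex.I) = 0}.Countable := by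
    have hq0 : q ≠ 0 := by intro h0; simp [h0] at h
    have : {θ : ℝ | 1 - q * Complex.exp (θ * Complex.I) = 0} ⊆
        range (fun m : ℤ => - Complex.arg q + m * (2 * Real.pi)) := by
      intro θ hθ
      simp only [mem_ofPred_eq] at hθ
      have e1 : q = Complex.exp (Complex.arg q * Complex.I) := by
        conv_lhs => rw [← Complex.norm_mul_exp_arg_mul_I q, h]
        simp
      rw [e1, ← Complex.exp_add] at hθ
      have h3 := (sub_eq_zero.1 hθ).symm
      rw [Complex.exp_eq_one_iff] at h3
      obtain ⟨m, hm⟩ := h3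
      refine ⟨m, ?_⟩
      have h4 := congrArg Complex.im hm
      simp at h4
      linarith
    exact (countable_range _).mono this
  have := hcount.measure_zero volume
  rw [ae_iff]; simpa using this

lemma ang_log_ae (m r t : ℝ) (hr : 0 < r) : ∀ᵐ θ : ℝ,
    Real.log |m + r * Real.cos θ - t| = Real.log (r / (2 * ‖angJ ((t - m) / r)‖)) +
      Real.log ‖1 - angJ ((t - m) / r) * Complex.exp (θ * Complex.I)‖ +
      Real.log ‖1 - (starRingEnd ℂ) (angJ ((t - m) / r)) * Complex.exp (θ * Complex.I)‖ := by
  set s := (t - m) / r with hs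
  set q := angJ s with hq
  have hq0 : 0 < ‖q‖ := norm_pos_iff.2 (angJ_ne_zero s)
  filter_upwards [ang_zero_ae q, ang_zero_ae ((starRingEnd ℂ) q)] with θ h1 h2
  have e2 : ‖1 - (starRingEnd ℂ) q * Complex.exp (θ * Complex.I)‖ =
      ‖1 - q * Complex.exp (-(θ * Complex.I))‖ := by
    rw [← Complex.norm_conj (1 - (starRingEnd ℂ) q * Complex.exp (θ * Complex.I))]
    simp [← Complex.exp_conj]
  have e3 : ‖1 - q * Complex.exp (θ * Complex.I)‖ *
      ‖1 - (starRingEnd ℂ) q * Complex.exp (θ * Complex.I)‖ =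
      2 * ‖q‖ / r * |m + r * Real.cos θ - t| := by
    rw [e2, ← norm_mul]
    have hee : Complex.exp (θ * Complex.I) * Complex.exp (-(θ * Complex.I)) = 1 := by
      rw [← Complex.exp_add]; simp
    have hcs : Complex.exp (θ * Complex.I) + Complex.exp (-(θ * Complex.I)) =
        2 * (Real.cos θ : ℂ) := by
      rw [Complex.ofReal_cos, Complex.cos]; rw [neg_mul]; ring
    have : (1 - q * Complex.exp (θ * Complex.I)) * (1 - q * Complex.exp (-(θ * Complex.I))) =
        2 * q * ((s - Real.cos θ : ℝ) : ℂ) := by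
      have h3 := angJ_eq s
      rw [← hq] at h3
      push_cast [-Complex.ofReal_cos]
      linear_combination q ^ 2 * hee - q * hcs + h3
    rw [this, norm_mul, Complex.norm_real, norm_mul, Real.norm_eq_abs]
    have h4 : m + r * Real.cos θ - t = -(r * (s - Real.cos θ)) := by
      rw [hs]; field_simp; ring
    rw [h4, abs_neg, abs_mul, abs_of_pos hr]
    simp
    field_simp
  have p1 := norm_pos_iff.2 h1
  have p2 := norm_pos_iff.2 h2
  rw [add_assoc, ← Real.log_mul p1.ne' p2.ne', e3, ← Real.log_mul (by positivity)]
  · congr 1; field_simp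
  · rw [← e3]; positivity

lemma ang_kernel_intervalIntegrable (m r t : ℝ) (hr : 0 < r) :
    IntervalIntegrable (fun θ => Real.log |m + r * Real.cos θ - t|) volume 0 (2 * Real.pi) := by
  have h := ((intervalIntegrable_const (c := Real.log (r / (2 * ‖angJ ((t - m) / r)‖)))).add
    (ang_log_intervalIntegrable (angJ ((t - m) / r)))).add
    (ang_log_intervalIntegrable ((starRingEnd ℂ) (angJ ((t - m) / r))))
  refine h.congr_ae ?_
  have := ae_restrict_of_ae (s := uIoc 0 (2 * Real.pi)) (ang_log_ae m r t hr)
  filter_upwards [this] with θ hθ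
  rw [hθ]

lemma ang_kernel_coeff (m r t : ℝ) (hr : 0 < r) (n : ℕ) (hn : n ≠ 0) :
    (∫ θ in (0:ℝ)..(2 * Real.pi), Real.log |m + r * Real.cos θ - t| * Real.cos (n * θ)) =
      - (2 * Real.pi / n) * (angJ ((t - m) / r) ^ n).re := by
  set q := angJ ((t - m) / r) with hq
  set C := Real.log (r / (2 * ‖q‖))
  have hq1 : ‖q‖ ≤ 1 := angJ_norm_le _
  have e : (∫ θ in (0:ℝ)..(2 * Real.pi),
      Real.log |m + r * Real.cos θ - t| * Real.cos (n * θ)) =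
      ∫ θ in (0:ℝ)..(2 * Real.pi), ((C * Real.cos (n * θ) +
      Real.log ‖1 - q * Complex.exp (θ * Complex.I)‖ * Real.cos (n * θ)) +
      Real.log ‖1 - (starRingEnd ℂ) q * Complex.exp (θ * Complex.I)‖ * Real.cos (n * θ)) := by
    refine intervalIntegral.integral_congr_ae ?_
    filter_upwards [ang_log_ae m r t hr] with θ hθ _
    rw [hθ]; ring
  have hcos : Continuous fun θ : ℝ => Real.cos (n * θ) := by fun_prop
  have i1 : IntervalIntegrable (fun θ : ℝ => C * Real.cos (n * θ)) volume 0 (2 * Real.pi) :=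
    (hcos.const_mul C).intervalIntegrable _ _
  have i2 := fun q => (ang_log_intervalIntegrable q).mul_continuousOn hcos.continuousOn
  rw [e, intervalIntegral.integral_add (i1.add (i2 _)) (i2 _),
    intervalIntegral.integral_add i1 (i2 _), ang_log_le q hq1 n,
    ang_log_le _ (by rwa [Complex.norm_conj]) n, intervalIntegral.integral_const_mul]
  have hc : (∫ θ in (0:ℝ)..(2 * Real.pi), Real.cos (n * θ)) = 0 := by
    have hn' : (n:ℝ) ≠ 0 := by exact_mod_cast hn
    rw [intervalIntegral.integral_comp_mul_left _ hn', integral_cos]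
    have : Real.sin (n * (2 * Real.pi)) = 0 := by
      have := Real.sin_nat_mul_pi (2 * n)
      push_cast at this
      rw [← this]; ring_nf
    rw [this]; simp
  rw [hc, ← map_pow, Complex.conj_re]; ring

lemma ang_abs_log_int (q : ℂ) (hq : ‖q‖ ≤ 1) :
    (∫ θ in (0:ℝ)..(2 * Real.pi), |Real.log ‖1 - q * Complex.exp (θ * Complex.I)‖|) ≤
      4 * Real.pi * Real.log 2 := by
  have h0 := ang_log_le q hq 0
  simp only [Nat.cast_zero, zero_mul, Real.cos_zero, mul_one, div_zero, neg_zero] at h0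
  have hi := ang_log_intervalIntegrable q
  have h2 : (∫ θ in (0:ℝ)..(2 * Real.pi), |Real.log ‖1 - q * Complex.exp (θ * Complex.I)‖|) ≤
      ∫ θ in (0:ℝ)..(2 * Real.pi),
        (2 * Real.log 2 - Real.log ‖1 - q * Complex.exp (θ * Complex.I)‖) := by
    refine intervalIntegral.integral_mono_on (by positivity) hi.abs
      ((intervalIntegrable_const).sub hi) fun θ _ => ?_
    have hn : ‖1 - q * Complex.exp (θ * Complex.I)‖ ≤ 2 := by
      refine (norm_sub_le _ _).trans ?_
      rw [ang_norm_q]; simp; linarith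
    have h6 : 0 < Real.log 2 := Real.log_pos (by norm_num)
    rcases (norm_nonneg (1 - q * Complex.exp (θ * Complex.I))).eq_or_lt with h | h
    · rw [← h]; simp; linarith
    · have h5 := Real.log_le_log h hn
      rw [abs_le]; constructor <;> linarith
  rw [intervalIntegral.integral_sub intervalIntegrable_const hi, h0] at h2
  refine h2.trans (le_of_eq ?_)
  simp; ring

lemma ang_kernel_abs (m r t R : ℝ) (hr : 0 < r) (ht : |(t - m) / r| ≤ R) :
    (∫ θ in (0:ℝ)..(2 * Real.pi), abs (Real.log |m + r * Real.cos θ - t|)) ≤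
      2 * Real.pi * (|Real.log (r / 2)| + Real.log (2 * R + 1)) + 8 * Real.pi * Real.log 2 := by
  set q := angJ ((t - m) / r) with hq
  have hq1 : ‖q‖ ≤ 1 := angJ_norm_le _
  have hq0 : 0 < ‖q‖ := norm_pos_iff.2 (angJ_ne_zero _)
  have hR : 0 ≤ R := (abs_nonneg _).trans ht
  have hC : |Real.log (r / (2 * ‖q‖))| ≤ |Real.log (r / 2)| + Real.log (2 * R + 1) := by
    rw [show r / (2 * ‖q‖) = (r / 2) * ‖q‖⁻¹ by field_simp, Real.log_mul (by positivity)
      (by positivity)]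
    refine (abs_add_le _ _).trans (add_le_add_right ?_ _)
    have h1 : 1 ≤ ‖q‖⁻¹ := (one_le_inv₀ hq0).2 hq1
    rw [abs_of_nonneg (Real.log_nonneg h1)]
    refine Real.log_le_log (by positivity) ?_
    rw [inv_le_iff_one_le_mul₀ hq0, mul_comm]
    refine (angJ_inv_le ((t - m) / r)).trans ?_
    rw [← hq]; gcongr
  have h2 : (∫ θ in (0:ℝ)..(2 * Real.pi), abs (Real.log |m + r * Real.cos θ - t|)) ≤
      ∫ θ in (0:ℝ)..(2 * Real.pi), ((|Real.log (r / (2 * ‖q‖))| +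
      |Real.log ‖1 - q * Complex.exp (θ * Complex.I)‖|) +
      |Real.log ‖1 - (starRingEnd ℂ) q * Complex.exp (θ * Complex.I)‖|) := by
    refine intervalIntegral.integral_mono_ae (by positivity)
      (ang_kernel_intervalIntegrable m r t hr).abs
      (((intervalIntegrable_const).add (ang_log_intervalIntegrable q).abs).add
        (ang_log_intervalIntegrable _).abs) ?_
    filter_upwards [ang_log_ae m r t hr] with θ hθ
    rw [hθ]; exact abs_add_three _ _ _
  rw [intervalIntegral.integral_add ((intervalIntegrable_const).add
    (ang_log_intervalIntegrable q).abs) (ang_log_intervalIntegrable _).abs,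
    intervalIntegral.integral_add intervalIntegrable_const
    (ang_log_intervalIntegrable q).abs] at h2
  have h3 := ang_abs_log_int q hq1
  have h4 := ang_abs_log_int ((starRingEnd ℂ) q) (by rwa [Complex.norm_conj])
  have h5 : (∫ θ in (0:ℝ)..(2 * Real.pi), |Real.log (r / (2 * ‖q‖))|) ≤
      2 * Real.pi * (|Real.log (r / 2)| + Real.log (2 * R + 1)) := by
    rw [intervalIntegral.integral_const, smul_eq_mul, sub_zero]
    exact mul_le_mul_of_nonneg_left hC (by positivity)
  linarith

lemma ang_kernel_prod_integrable (m r R : ℝ) (hr : 0 < r) (ω : Measure ℝ) [IsFiniteMeasure ω]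
    (hω : ∀ᵐ t ∂ω, |(t - m) / r| ≤ R) :
    Integrable (fun p : ℝ × ℝ => Real.log |m + r * Real.cos p.1 - p.2|)
      ((volume.restrict (Ioc 0 (2 * Real.pi))).prod ω) := by
  have hm : Measurable (fun p : ℝ × ℝ => Real.log |m + r * Real.cos p.1 - p.2|) := by fun_prop
  rw [integrable_prod_iff' hm.aestronglyMeasurable]
  have hpi : (0:ℝ) ≤ 2 * Real.pi := by positivity
  constructor
  · refine Eventually.of_forall fun t => ?_
    exact (intervalIntegrable_iff_integrableOn_Ioc_of_le hpi).1
      (ang_kernel_intervalIntegrable m r t hr)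
  · have hm2 : Measurable (fun p : ℝ × ℝ => ‖Real.log |m + r * Real.cos p.2 - p.1|‖) := by
      fun_prop
    refine Integrable.of_bound (hm2.aestronglyMeasurable.integral_prod_right'
      (μ := ω) (ν := volume.restrict (Ioc 0 (2 * Real.pi))))
      (2 * Real.pi * (|Real.log (r / 2)| + Real.log (2 * R + 1)) + 8 * Real.pi * Real.log 2) ?_
    · filter_upwards [hω] with t ht
      rw [Real.norm_of_nonneg (integral_nonneg fun _ => norm_nonneg _)]
      have := ang_kernel_abs m r t R hr ht
      rwa [intervalIntegral.integral_of_le hpi] at this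


lemma ang_fubini (m r R : ℝ) (hr : 0 < r) (ω : Measure ℝ) [IsFiniteMeasure ω]
    (hω : ∀ᵐ t ∂ω, |(t - m) / r| ≤ R) (n : ℕ) (hn : n ≠ 0) :
    IntervalIntegrable (fun θ => (∫ t, Real.log |m + r * Real.cos θ - t| ∂ω) * Real.cos (n * θ))
      volume 0 (2 * Real.pi) ∧
    (∫ θ in (0:ℝ)..(2 * Real.pi),
      (∫ t, Real.log |m + r * Real.cos θ - t| ∂ω) * Real.cos (n * θ)) =
      - (2 * Real.pi / n) * ∫ t, (angJ ((t - m) / r) ^ n).re ∂ω := by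
  have hpi : (0:ℝ) ≤ 2 * Real.pi := by positivity
  have h1 := ang_kernel_prod_integrable m r R hr ω hω
  have h2 : Integrable (fun p : ℝ × ℝ => Real.log |m + r * Real.cos p.1 - p.2|
      * Real.cos (n * p.1)) ((volume.restrict (Ioc 0 (2 * Real.pi))).prod ω) := by
    refine h1.mul_bdd (c := 1) ?_ ?_
    · apply Measurable.aestronglyMeasurable; fun_prop
    · exact Eventually.of_forall fun p => Real.abs_cos_le_one _
  constructor
  · rw [intervalIntegrable_iff_integrableOn_Ioc_of_le hpi]
    have := h2.integral_prod_left
    simp_rw [integral_mul_const] at this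
    exact this
  · rw [intervalIntegral.integral_of_le hpi]
    simp_rw [← integral_mul_const]
    rw [integral_integral_swap (f := fun θ t => Real.log |m + r * Real.cos θ - t|
      * Real.cos (n * θ)) h2]
    rw [← integral_const_mul]
    congr 1
    ext t
    rw [← ang_kernel_coeff m r t hr n hn, intervalIntegral.integral_of_le hpi]

lemma ang_int_cos (n : ℕ) (hn : n ≠ 0) :
    (∫ θ in (0:ℝ)..(2 * Real.pi), Real.cos (n * θ)) = 0 := by
  have hn' : (n:ℝ) ≠ 0 := by exact_mod_cast hn
  rw [intervalIntegral.integral_comp_mul_left _ hn', integral_cos]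
  have : Real.sin (n * (2 * Real.pi)) = 0 := by
    have := Real.sin_nat_mul_pi (2 * n)
    push_cast at this
    rw [← this]; ring_nf
  rw [this]; simp

lemma ang_moments (m r R ℓ : ℝ) (hr : 0 < r) (ω σ : Measure ℝ) [IsFiniteMeasure ω]
    [IsFiniteMeasure σ] (hω : ∀ᵐ t ∂ω, |(t - m) / r| ≤ 1) (hσ : ∀ᵐ t ∂σ, |(t - m) / r| ≤ R)
    (heq : ∀ x ∈ Icc (m - r) (m + r),
      2 * (∫ t, Real.log |x - t| ∂ω) + ∫ t, Real.log |x - t| ∂σ = ℓ)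
    (n : ℕ) (hn : n ≠ 0) :
    ∫ t, (angJ ((t - m) / r) ^ n).re ∂ω = - (1 / 2) * ∫ t, (angJ ((t - m) / r) ^ n).re ∂σ := by
  obtain ⟨i1, e1⟩ := ang_fubini m r 1 hr ω hω n hn
  obtain ⟨i2, e2⟩ := ang_fubini m r R hr σ hσ n hn
  have h : (∫ θ in (0:ℝ)..(2 * Real.pi),
      (2 * ((∫ t, Real.log |m + r * Real.cos θ - t| ∂ω) * Real.cos (n * θ)) +
      (∫ t, Real.log |m + r * Real.cos θ - t| ∂σ) * Real.cos (n * θ))) = 0 := by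
    have : ∀ θ : ℝ, (2 * ((∫ t, Real.log |m + r * Real.cos θ - t| ∂ω) * Real.cos (n * θ)) +
      (∫ t, Real.log |m + r * Real.cos θ - t| ∂σ) * Real.cos (n * θ)) =
      ℓ * Real.cos (n * θ) := by
      intro θ
      rw [← heq (m + r * Real.cos θ) ⟨by nlinarith [Real.neg_one_le_cos θ],
        by nlinarith [Real.cos_le_one θ]⟩]
      ring
    simp_rw [this]
    rw [intervalIntegral.integral_const_mul, ang_int_cos n hn, mul_zero]
  rw [intervalIntegral.integral_add (i1.const_mul 2) i2, intervalIntegral.integral_const_mul,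
    e1, e2] at h
  have hc : (2 * Real.pi / n) ≠ 0 := by
    have hn' : (n:ℝ) ≠ 0 := by exact_mod_cast hn
    positivity
  have h3 : (2 * Real.pi / n) * (2 * (∫ t, (angJ ((t - m) / r) ^ n).re ∂ω) +
    ∫ t, (angJ ((t - m) / r) ^ n).re ∂σ) = 0 := by linear_combination -h
  rcases mul_eq_zero.1 h3 with h4 | h4
  · exact absurd h4 hc
  · linarith

/-- the balayage kernel -/
def angK (m r t x : ℝ) : ℝ := Real.sqrt ((t - m) ^ 2 - r ^ 2) / |t - x|

lemma angK_measurable (m r : ℝ) : Measurable (fun p : ℝ × ℝ => angK m r p.2 p.1) := by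
  unfold angK; fun_prop

lemma angK_coeff (m r t : ℝ) (hr : 0 < r) (ht : r < |t - m|) (n : ℕ) :
    (∫ θ in (0:ℝ)..(2 * Real.pi), angK m r t (m + r * Real.cos θ) * Real.cos (n * θ)) =
      2 * Real.pi * (angJ ((t - m) / r) ^ n).re := by
  set s := (t - m) / r with hs
  have h1 : 1 < |s| := by rw [hs, abs_div, abs_of_pos hr, one_lt_div hr]; exact ht
  obtain ⟨q, hq, hq1, hq0, hq2, hq3, hq4⟩ := angJ_out s h1
  rw [hq, ← Complex.ofReal_pow, Complex.ofReal_re, ← ang_poisson q hq1 n]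
  congr 1
  ext θ
  congr 1
  have e1 : (t - m) ^ 2 - r ^ 2 = r ^ 2 * (s ^ 2 - 1) := by rw [hs]; field_simp
  have e2 : t - (m + r * Real.cos θ) = r * (s - Real.cos θ) := by rw [hs]; field_simp; ring
  have e3 : 1 - 2 * q * Real.cos θ + q ^ 2 = 2 * (q * (s - Real.cos θ)) := by linarith
  have hpos : 0 < q * (s - Real.cos θ) := by
    rcases lt_or_gt_of_ne hq0 with h | h
    · have hs0 : s < 0 := by nlinarith
      rw [abs_of_neg hs0] at h1
      exact mul_pos_of_neg_of_neg h (by linarith [Real.neg_one_le_cos θ])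
    · have hs0 : 0 < s := by nlinarith
      rw [abs_of_pos hs0] at h1
      exact mul_pos h (by linarith [Real.cos_le_one θ])
  have hs' : s - Real.cos θ ≠ 0 := fun h => by rw [h, mul_zero] at hpos; exact lt_irrefl _ hpos
  rw [angK, e1, e2, e3, hq3, Real.sqrt_mul (by positivity), Real.sqrt_sq hr.le, abs_mul,
    abs_of_pos hr, ← abs_of_pos hpos, abs_mul]
  have := abs_pos.2 hq0
  have := abs_pos.2 hs'
  field_simp

/-- the (unnormalised) density with respect to the arcsine law -/
def angH (m r : ℝ) (ω σ : Measure ℝ) (x : ℝ) : ℝ :=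
  ω.real univ + σ.real univ / 2 - (1 / 2) * ∫ t, angK m r t x ∂σ

lemma angK_bound (m r δ R t x : ℝ) (hδ : 0 < δ) (h1 : r + δ ≤ |t - m|)
    (h2 : |t - m| ≤ R) (hx : |x - m| ≤ r) : |angK m r t x| ≤ R / δ := by
  have hd : δ ≤ |t - x| := by
    have := abs_sub_abs_le_abs_sub (t - m) (x - m)
    rw [show t - m - (x - m) = t - x by ring] at this
    linarith
  rw [angK, abs_div, abs_abs, abs_of_nonneg (Real.sqrt_nonneg _)]
  have : Real.sqrt ((t - m) ^ 2 - r ^ 2) ≤ R := by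
    refine (Real.sqrt_le_sqrt (show (t - m) ^ 2 - r ^ 2 ≤ (t - m) ^ 2 by nlinarith)).trans ?_
    rwa [Real.sqrt_sq_eq_abs]
  have hR : 0 ≤ R := (abs_nonneg _).trans h2
  gcongr

lemma angH_coeff (m r δ R : ℝ) (hr : 0 < r) (hδ : 0 < δ) (ω σ : Measure ℝ) [IsFiniteMeasure ω]
    [IsFiniteMeasure σ] (hσ : ∀ᵐ t ∂σ, r + δ ≤ |t - m| ∧ |t - m| ≤ R) (n : ℕ) :
    (∫ θ in (0:ℝ)..(2 * Real.pi), angH m r ω σ (m + r * Real.cos θ) * Real.cos (n * θ)) =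
      if n = 0 then 2 * Real.pi * ω.real univ
      else - Real.pi * ∫ t, (angJ ((t - m) / r) ^ n).re ∂σ := by
  have hpi : (0:ℝ) ≤ 2 * Real.pi := by positivity
  have hxb : ∀ θ, |m + r * Real.cos θ - m| ≤ r := fun θ => by
    rw [add_sub_cancel_left, abs_mul, abs_of_pos hr]
    exact mul_le_of_le_one_right hr.le (Real.abs_cos_le_one _)
  have h2 : Integrable (fun p : ℝ × ℝ => angK m r p.2 (m + r * Real.cos p.1)
      * Real.cos (n * p.1)) ((volume.restrict (Ioc 0 (2 * Real.pi))).prod σ) := by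
    refine Integrable.of_bound (C := R / δ) ?_ ?_
    · apply Measurable.aestronglyMeasurable
      unfold angK; fun_prop
    · have : ∀ᵐ p ∂((volume.restrict (Ioc 0 (2 * Real.pi))).prod σ),
          r + δ ≤ |p.2 - m| ∧ |p.2 - m| ≤ R :=
        Measure.quasiMeasurePreserving_snd.ae hσ
      filter_upwards [this] with p hp
      rw [norm_mul]
      refine (mul_le_of_le_one_right (norm_nonneg _) (Real.abs_cos_le_one _)).trans ?_
      exact angK_bound m r δ R _ _ hδ hp.1 hp.2 (hxb _)
  have hI : IntervalIntegrable (fun θ => (∫ t, angK m r t (m + r * Real.cos θ) ∂σ)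
      * Real.cos (n * θ)) volume 0 (2 * Real.pi) := by
    rw [intervalIntegrable_iff_integrableOn_Ioc_of_le hpi]
    have := h2.integral_prod_left
    simp_rw [integral_mul_const] at this
    exact this
  have hE : (∫ θ in (0:ℝ)..(2 * Real.pi), (∫ t, angK m r t (m + r * Real.cos θ) ∂σ)
      * Real.cos (n * θ)) = 2 * Real.pi * ∫ t, (angJ ((t - m) / r) ^ n).re ∂σ := by
    rw [intervalIntegral.integral_of_le hpi]
    simp_rw [← integral_mul_const]
    rw [integral_integral_swap (f := fun θ t => angK m r t (m + r * Real.cos θ)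
      * Real.cos (n * θ)) h2, ← integral_const_mul]
    refine integral_congr_ae ?_
    filter_upwards [hσ] with t ht
    rw [← angK_coeff m r t hr (by linarith) n, intervalIntegral.integral_of_le hpi]
  have e : ∀ θ, angH m r ω σ (m + r * Real.cos θ) * Real.cos (n * θ) =
      (ω.real univ + σ.real univ / 2) * Real.cos (n * θ) - (1 / 2) *
        ((∫ t, angK m r t (m + r * Real.cos θ) ∂σ) * Real.cos (n * θ)) := by
    intro θ; rw [angH]; ring
  simp_rw [e]
  rw [intervalIntegral.integral_sub ((by fun_prop : Continuous _).intervalIntegrable _ _)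
    (hI.const_mul _), intervalIntegral.integral_const_mul, intervalIntegral.integral_const_mul, hE]
  split_ifs with h
  · subst h
    simp; ring
  · rw [ang_int_cos n h]; ring

lemma angH_continuousOn (m r δ R : ℝ) (hδ : 0 < δ) (ω σ : Measure ℝ)
    [IsFiniteMeasure ω]
    [IsFiniteMeasure σ] (hσ : ∀ᵐ t ∂σ, r + δ ≤ |t - m| ∧ |t - m| ≤ R) :
    ContinuousOn (angH m r ω σ) (Icc (m - r) (m + r)) := by
  unfold angH
  refine ContinuousOn.sub continuousOn_const (ContinuousOn.mul continuousOn_const ?_)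
  refine continuousOn_of_dominated (bound := fun _ => R / δ) ?_ ?_ (integrable_const _) ?_
  · intro x _
    apply Measurable.aestronglyMeasurable
    unfold angK; fun_prop
  · intro x hx
    filter_upwards [hσ] with t ht
    exact angK_bound m r δ R t x hδ ht.1 ht.2
      (abs_le.2 ⟨by linarith [hx.1], by linarith [hx.2]⟩)
  · filter_upwards [hσ] with t ht
    unfold angK
    refine ContinuousOn.div continuousOn_const (by fun_prop) fun x hx => ?_
    have := abs_sub_abs_le_abs_sub (t - m) (x - m)
    rw [show t - m - (x - m) = t - x by ring] at this
    have hx' : |x - m| ≤ r := abs_le.2 ⟨by linarith [hx.1], by linarith [hx.2]⟩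
    linarith

/-- Main identity on Chebyshev polynomials -/
lemma ang_cheb (m r δ R ℓ : ℝ) (hr : 0 < r) (hδ : 0 < δ) (ω σ : Measure ℝ) [IsFiniteMeasure ω]
    [IsFiniteMeasure σ] (hω : ∀ᵐ t ∂ω, |t - m| ≤ r)
    (hσ : ∀ᵐ t ∂σ, r + δ ≤ |t - m| ∧ |t - m| ≤ R)
    (heq : ∀ x ∈ Icc (m - r) (m + r),
      2 * (∫ t, Real.log |x - t| ∂ω) + ∫ t, Real.log |x - t| ∂σ = ℓ) (n : ℕ) :
    2 * Real.pi * ∫ t, (Polynomial.Chebyshev.T ℝ n).eval ((t - m) / r) ∂ω =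
    ∫ θ in (0:ℝ)..(2 * Real.pi), (Polynomial.Chebyshev.T ℝ n).eval (Real.cos θ) *
      angH m r ω σ (m + r * Real.cos θ) := by
  have e1 : ∀ θ : ℝ, (Polynomial.Chebyshev.T ℝ n).eval (Real.cos θ) *
      angH m r ω σ (m + r * Real.cos θ) =
      angH m r ω σ (m + r * Real.cos θ) * Real.cos (n * θ) := by
    intro θ
    have := Polynomial.Chebyshev.T_real_cos θ n
    rw [mul_comm]; congr 1
  simp_rw [e1]
  rw [angH_coeff m r δ R hr hδ ω σ hσ n]
  have hω' : ∀ᵐ t ∂ω, |(t - m) / r| ≤ 1 := by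
    filter_upwards [hω] with t ht
    rw [abs_div, abs_of_pos hr, div_le_one hr]; exact ht
  have hσ' : ∀ᵐ t ∂σ, |(t - m) / r| ≤ R / r := by
    filter_upwards [hσ] with t ht
    rw [abs_div, abs_of_pos hr]; gcongr; exact ht.2
  split_ifs with h
  · subst h; simp
  · have e2 : ∫ t, (Polynomial.Chebyshev.T ℝ n).eval ((t - m) / r) ∂ω =
        ∫ t, (angJ ((t - m) / r) ^ n).re ∂ω := by
      refine integral_congr_ae ?_
      filter_upwards [hω'] with t ht
      rw [angJ_in _ ht, ← Complex.exp_nat_mul]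
      have h3 := Polynomial.Chebyshev.T_real_cos (Real.arccos ((t - m) / r)) n
      rw [Real.cos_arccos (abs_le.1 ht).1 (abs_le.1 ht).2] at h3
      rw [h3]
      have h4 := Complex.exp_ofReal_mul_I_re (n * Real.arccos ((t - m) / r))
      push_cast at h4 ⊢
      rw [← mul_assoc, h4]
    rw [e2, ang_moments m r (R / r) ℓ hr ω σ hω' hσ' heq n h]; ring


lemma ang_span (P : ℝ[X]) :
    P ∈ Submodule.span ℝ (range fun n : ℕ => Polynomial.Chebyshev.T ℝ n) := by
  set S := Submodule.span ℝ (range fun n : ℕ => Polynomial.Chebyshev.T ℝ n) with hS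
  have hT : ∀ n : ℕ, Polynomial.Chebyshev.T ℝ n ∈ S := fun n => Submodule.subset_span ⟨n, rfl⟩
  have hX : ∀ Q ∈ S, X * Q ∈ S := by
    intro Q hQ
    refine Submodule.span_induction ?_ ?_ ?_ ?_ hQ
    · rintro _ ⟨n, rfl⟩
      dsimp only
      rcases n with _ | n
      · have := hT 1
        simpa using this
      · have h := Polynomial.Chebyshev.T_add_two ℝ (n : ℤ)
        have h2 : X * Polynomial.Chebyshev.T ℝ ((n + 1 : ℕ) : ℤ) = (1 / 2 : ℝ) •
            (Polynomial.Chebyshev.T ℝ ((n + 2 : ℕ) : ℤ) + Polynomial.Chebyshev.T ℝ (n : ℤ)) := by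
          push_cast
          rw [h, sub_add_cancel, mul_assoc, ← smul_mul_assoc,
            show (2 : ℝ[X]) = Polynomial.C (2:ℝ) by rfl, Polynomial.smul_C]
          simp
        rw [h2]
        exact S.smul_mem _ (S.add_mem (hT _) (hT _))
    · simp
    · intro x y _ _ hx hy; rw [mul_add]; exact S.add_mem hx hy
    · intro c x _ hx; rw [mul_smul_comm]; exact S.smul_mem _ hx
  have hpow : ∀ n : ℕ, (X ^ n : ℝ[X]) ∈ S := by
    intro n
    induction n with
    | zero => simpa using hT 0
    | succ k ih => rw [pow_succ']; exact hX _ ih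
  induction P using Polynomial.induction_on' with
  | add p q hp hq => exact S.add_mem hp hq
  | monomial n a =>
    rw [← Polynomial.C_mul_X_pow_eq_monomial, ← Polynomial.smul_eq_C_mul]
    exact S.smul_mem _ (hpow n)

lemma ang_integrable_cont (m r : ℝ) (ω : Measure ℝ) [IsFiniteMeasure ω]
    (hω : ∀ᵐ t ∂ω, |t - m| ≤ r) (f : ℝ → ℝ) (hf : Continuous f) : Integrable f ω := by
  obtain ⟨C, hC⟩ := (isCompact_Icc (a := m - r) (b := m + r)).exists_bound_of_continuousOn
    hf.continuousOn
  refine Integrable.of_bound hf.aestronglyMeasurable C ?_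
  filter_upwards [hω] with t ht
  exact hC t ⟨by linarith [(abs_le.1 ht).1], by linarith [(abs_le.1 ht).2]⟩

lemma ang_mem (m r θ : ℝ) (hr : 0 < r) : m + r * Real.cos θ ∈ Icc (m - r) (m + r) :=
  ⟨by nlinarith [Real.neg_one_le_cos θ], by nlinarith [Real.cos_le_one θ]⟩

lemma angHcos_continuous (m r : ℝ) (hr : 0 < r) (H : ℝ → ℝ)
    (hH : ContinuousOn H (Icc (m - r) (m + r))) :
    Continuous fun θ => H (m + r * Real.cos θ) :=
  hH.comp_continuous (by fun_prop) fun θ => ang_mem m r θ hr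

lemma ang_poly (m r : ℝ) (hr : 0 < r) (ω : Measure ℝ) [IsFiniteMeasure ω]
    (hω : ∀ᵐ t ∂ω, |t - m| ≤ r) (H : ℝ → ℝ)
    (hH : ContinuousOn H (Icc (m - r) (m + r)))
    (hT : ∀ n : ℕ, 2 * Real.pi * ∫ t, (Polynomial.Chebyshev.T ℝ n).eval ((t - m) / r) ∂ω =
    ∫ θ in (0:ℝ)..(2 * Real.pi), (Polynomial.Chebyshev.T ℝ n).eval (Real.cos θ) *
      H (m + r * Real.cos θ)) (P : ℝ[X]) :
    2 * Real.pi * ∫ t, P.eval ((t - m) / r) ∂ω =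
    ∫ θ in (0:ℝ)..(2 * Real.pi), P.eval (Real.cos θ) * H (m + r * Real.cos θ) := by
  have hHc := angHcos_continuous m r hr H hH
  refine Submodule.span_induction ?_ ?_ ?_ ?_ (ang_span P)
  · rintro _ ⟨n, rfl⟩
    exact hT n
  · simp
  · intro x y _ _ hx hy
    simp only [Polynomial.eval_add, add_mul]
    rw [integral_add, intervalIntegral.integral_add, mul_add, hx, hy]
    · exact Continuous.intervalIntegrable (Continuous.mul (by fun_prop) hHc) _ _
    · exact Continuous.intervalIntegrable (Continuous.mul (by fun_prop) hHc) _ _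
    · exact ang_integrable_cont m r ω hω _ (by fun_prop)
    · exact ang_integrable_cont m r ω hω _ (by fun_prop)
  · intro c x _ hx
    simp only [Polynomial.eval_smul, smul_eq_mul, mul_assoc]
    rw [integral_const_mul, intervalIntegral.integral_const_mul, ← hx]
    ring

lemma ang_cont (m r : ℝ) (hr : 0 < r) (ω : Measure ℝ) [IsFiniteMeasure ω]
    (hω : ∀ᵐ t ∂ω, |t - m| ≤ r) (H : ℝ → ℝ)
    (hH : ContinuousOn H (Icc (m - r) (m + r)))
    (hT : ∀ n : ℕ, 2 * Real.pi * ∫ t, (Polynomial.Chebyshev.T ℝ n).eval ((t - m) / r) ∂ω =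
    ∫ θ in (0:ℝ)..(2 * Real.pi), (Polynomial.Chebyshev.T ℝ n).eval (Real.cos θ) *
      H (m + r * Real.cos θ)) (f : ℝ → ℝ) (hf : Continuous f) :
    2 * Real.pi * ∫ t, f t ∂ω =
    ∫ θ in (0:ℝ)..(2 * Real.pi), f (m + r * Real.cos θ) * H (m + r * Real.cos θ) := by
  have hHc := angHcos_continuous m r hr H hH
  have hpi : (0:ℝ) ≤ 2 * Real.pi := by positivity
  set M := 2 * Real.pi * ω.real univ + ∫ θ in (0:ℝ)..(2 * Real.pi), |H (m + r * Real.cos θ)|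
    with hM
  have hM0 : 0 ≤ M := by
    have := intervalIntegral.integral_nonneg (μ := volume) hpi
      (fun θ _ => abs_nonneg (H (m + r * Real.cos θ)))
    have := measureReal_nonneg (μ := ω) (s := univ)
    positivity
  have key : ∀ ε > 0, |2 * Real.pi * (∫ t, f t ∂ω) -
    ∫ θ in (0:ℝ)..(2 * Real.pi), f (m + r * Real.cos θ) * H (m + r * Real.cos θ)| ≤ ε * M := by
    intro ε hε
    obtain ⟨P, hP⟩ := exists_polynomial_near_of_continuousOn (-1) 1 (fun s => f (m + r * s))
      (by fun_prop) ε hε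
    have h1 := ang_poly m r hr ω hω H hH hT P
    have i1 := ang_integrable_cont m r ω hω f hf
    have i2 := ang_integrable_cont m r ω hω (fun t => P.eval ((t - m) / r)) (by fun_prop)
    have e1 : |(∫ t, f t ∂ω) - ∫ t, P.eval ((t - m) / r) ∂ω| ≤ ε * ω.real univ := by
      rw [← integral_sub i1 i2]
      rw [← Real.norm_eq_abs]
      refine norm_integral_le_of_norm_le_const (μ := ω) (C := ε) ?_
      filter_upwards [hω] with t ht
      have hs : |(t - m) / r| ≤ 1 := by
        rw [abs_div, abs_of_pos hr, div_le_one hr]; exact ht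
      have := hP ((t - m) / r) (abs_le.1 hs)
      rw [show m + r * ((t - m) / r) = t by field_simp; ring, abs_sub_comm] at this
      exact this.le
    have e2 : |(∫ θ in (0:ℝ)..(2 * Real.pi), f (m + r * Real.cos θ) * H (m + r * Real.cos θ)) -
        ∫ θ in (0:ℝ)..(2 * Real.pi), P.eval (Real.cos θ) * H (m + r * Real.cos θ)| ≤
        ε * ∫ θ in (0:ℝ)..(2 * Real.pi), |H (m + r * Real.cos θ)| := by
      have c1 : Continuous fun θ => f (m + r * Real.cos θ) * H (m + r * Real.cos θ) :=
        Continuous.mul (by fun_prop) hHc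
      have c2 : Continuous fun θ => P.eval (Real.cos θ) * H (m + r * Real.cos θ) :=
        Continuous.mul (by fun_prop) hHc
      rw [← intervalIntegral.integral_sub (c1.intervalIntegrable _ _) (c2.intervalIntegrable _ _), ← intervalIntegral.integral_const_mul,
        ← Real.norm_eq_abs]
      have c3 : Continuous fun θ => ε * |H (m + r * Real.cos θ)| := continuous_const.mul hHc.abs
      refine intervalIntegral.norm_integral_le_of_norm_le (μ := volume) hpi ?_
        (c3.intervalIntegrable _ _)
      refine Eventually.of_forall fun θ _ => ?_
      rw [← sub_mul, norm_mul]
      have := hP (Real.cos θ) ⟨Real.neg_one_le_cos θ, Real.cos_le_one θ⟩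
      rw [abs_sub_comm] at this
      exact mul_le_mul_of_nonneg_right this.le (norm_nonneg _)
    rw [← h1] at e2
    rw [abs_le] at e1 e2 ⊢
    rw [hM]
    constructor <;> nlinarith [Real.pi_pos]
  by_contra hne
  have hpos : 0 < |2 * Real.pi * (∫ t, f t ∂ω) -
    ∫ θ in (0:ℝ)..(2 * Real.pi), f (m + r * Real.cos θ) * H (m + r * Real.cos θ)| :=
    abs_pos.2 (sub_ne_zero.2 hne)
  set D := |2 * Real.pi * (∫ t, f t ∂ω) -
    ∫ θ in (0:ℝ)..(2 * Real.pi), f (m + r * Real.cos θ) * H (m + r * Real.cos θ)|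
  have := key (D / (2 * (M + 1))) (by positivity)
  have h3 : D / (2 * (M + 1)) * M ≤ D / 2 := by
    rw [div_mul_eq_mul_div, div_le_div_iff₀ (by positivity) (by positivity)]
    nlinarith
  linarith

lemma ang_nonneg (m r : ℝ) (hr : 0 < r) (ω : Measure ℝ) [IsFiniteMeasure ω]
    (H : ℝ → ℝ) (hH : ContinuousOn H (Icc (m - r) (m + r)))
    (hF : ∀ f : ℝ → ℝ, Continuous f → 2 * Real.pi * ∫ t, f t ∂ω =
    ∫ θ in (0:ℝ)..(2 * Real.pi), f (m + r * Real.cos θ) * H (m + r * Real.cos θ)) :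
    ∀ x ∈ Icc (m - r) (m + r), 0 ≤ H x := by
  have hle : m - r ≤ m + r := by linarith
  set G : ℝ → ℝ := fun x => max (- IccExtend hle (fun y : Icc (m - r) (m + r) => H y) x) 0 with hG
  have hGc : Continuous G := by
    have : Continuous (IccExtend hle (fun y : Icc (m - r) (m + r) => H y)) :=
      (continuousOn_iff_continuous_domRestrict.1 hH).Icc_extend'
    fun_prop
  have hGx : ∀ x ∈ Icc (m - r) (m + r), G x = max (- H x) 0 := by
    intro x hx; simp only [hG]; rw [IccExtend_of_mem hle _ hx]
  have h1 := hF G hGc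
  have hHc := angHcos_continuous m r hr H hH
  have h2 : ∀ θ, G (m + r * Real.cos θ) * H (m + r * Real.cos θ) =
      - (max (- H (m + r * Real.cos θ)) 0) ^ 2 := by
    intro θ
    rw [hGx _ (ang_mem m r θ hr)]
    rcases le_total (- H (m + r * Real.cos θ)) 0 with h | h
    · rw [max_eq_right h]; ring
    · rw [max_eq_left h]; ring
  simp_rw [h2] at h1
  rw [intervalIntegral.integral_neg] at h1
  have h3 : 0 ≤ ∫ t, G t ∂ω := integral_nonneg fun t => le_max_right _ _
  intro x hx
  by_contra hneg
  push Not at hneg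
  have h4 : 0 < ∫ θ in (0:ℝ)..(2 * Real.pi), (max (- H (m + r * Real.cos θ)) 0) ^ 2 := by
    refine intervalIntegral.integral_pos (by positivity)
      ((hHc.neg.max continuous_const).pow 2).continuousOn
      (fun θ _ => sq_nonneg _) ⟨Real.arccos ((x - m) / r), ⟨Real.arccos_nonneg _, ?_⟩, ?_⟩
    · linarith [Real.arccos_le_pi ((x - m) / r), Real.pi_pos]
    · rw [Real.cos_arccos (by rw [le_div_iff₀ hr]; linarith [hx.1])
        (by rw [div_le_iff₀ hr]; linarith [hx.2]),
        show m + r * ((x - m) / r) = x by field_simp; ring, max_eq_left (by linarith)]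
      exact pow_pos (by linarith) 2
  have := mul_nonneg (by positivity : 0 ≤ 2 * Real.pi) h3
  linarith

lemma ang_half (g : ℝ → ℝ) (hg : Continuous fun θ => g (Real.cos θ)) :
    (∫ θ in (0:ℝ)..(2 * Real.pi), g (Real.cos θ)) = 2 * ∫ θ in (0:ℝ)..Real.pi, g (Real.cos θ) := by
  rw [← intervalIntegral.integral_add_adjacent_intervals (b := Real.pi)
    (hg.intervalIntegrable _ _) (hg.intervalIntegrable _ _)]
  have : (∫ θ in Real.pi..(2 * Real.pi), g (Real.cos θ)) =
      ∫ θ in (0:ℝ)..Real.pi, g (Real.cos θ) := by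
    have h := intervalIntegral.integral_comp_sub_left (a := (0:ℝ)) (b := Real.pi)
      (fun θ => g (Real.cos θ)) (2 * Real.pi)
    simp only [Real.cos_two_pi_sub] at h
    rw [h]; congr 1 <;> ring
  rw [this]; ring

/-- density -/
def angRho (m r : ℝ) (H : ℝ → ℝ) (x : ℝ) : ℝ :=
  (Ioo (m - r) (m + r)).indicator (fun x => H x / (Real.pi * Real.sqrt (r ^ 2 - (x - m) ^ 2))) x

lemma ang_image (m r : ℝ) (hr : 0 < r) :
    (fun θ => m + r * Real.cos θ) '' Ioo 0 Real.pi = Ioo (m - r) (m + r) := by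
  ext x
  constructor
  · rintro ⟨θ, hθ, rfl⟩
    have h1 : Real.cos θ < 1 := by
      have := Real.cos_lt_cos_of_nonneg_of_le_pi le_rfl hθ.2.le hθ.1
      simpa using this
    have h2 : -1 < Real.cos θ := by
      have := Real.cos_lt_cos_of_nonneg_of_le_pi hθ.1.le le_rfl hθ.2
      simpa using this
    constructor <;> dsimp only <;> nlinarith
  · intro hx
    have h1 : -1 < (x - m) / r := by rw [lt_div_iff₀ hr]; linarith [hx.1]
    have h2 : (x - m) / r < 1 := by rw [div_lt_iff₀ hr]; linarith [hx.2]
    refine ⟨Real.arccos ((x - m) / r), ⟨Real.arccos_pos.2 h2, ?_⟩, ?_⟩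
    · rw [← Real.arccos_neg_one]
      exact Real.strictAntiOn_arccos ⟨le_rfl, by norm_num⟩ ⟨h1.le, h2.le⟩ h1
    · dsimp only
      rw [Real.cos_arccos h1.le h2.le]; field_simp; ring

lemma ang_rho_cv (m r : ℝ) (hr : 0 < r) (H f : ℝ → ℝ)
    (hH : ContinuousOn H (Icc (m - r) (m + r))) (hf : Continuous f) :
    Integrable (fun x => f x * angRho m r H x) ∧
    (∫ x, f x * angRho m r H x) = (1 / (2 * Real.pi)) *
    ∫ θ in (0:ℝ)..(2 * Real.pi), f (m + r * Real.cos θ) * H (m + r * Real.cos θ) := by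
  have hHc := angHcos_continuous m r hr H hH
  have hpi := Real.pi_pos
  set g : ℝ → ℝ := fun x => f x * (H x / (Real.pi * Real.sqrt (r ^ 2 - (x - m) ^ 2))) with hg
  have e0 : (fun x => f x * angRho m r H x) = (Ioo (m - r) (m + r)).indicator g := by
    ext x
    by_cases hx : x ∈ Ioo (m - r) (m + r)
    · simp [angRho, hx, hg]
    · simp [angRho, hx]
  have hd : ∀ θ ∈ Ioo 0 Real.pi, HasDerivWithinAt (fun θ => m + r * Real.cos θ)
      (r * (- Real.sin θ)) (Ioo 0 Real.pi) θ := fun θ _ =>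
    (((Real.hasDerivAt_cos θ).const_mul r).const_add m).hasDerivWithinAt
  have hinj : InjOn (fun θ => m + r * Real.cos θ) (Ioo 0 Real.pi) := by
    intro x hx y hy hxy
    have : Real.cos x = Real.cos y := by
      have h2 : r * Real.cos x = r * Real.cos y := by simpa using hxy
      exact mul_left_cancel₀ hr.ne' h2
    exact Real.injOn_cos (Ioo_subset_Icc_self hx) (Ioo_subset_Icc_self hy) this
  have e1 : ∀ θ ∈ Ioo 0 Real.pi, |r * (- Real.sin θ)| • g (m + r * Real.cos θ) =
      (1 / Real.pi) * (f (m + r * Real.cos θ) * H (m + r * Real.cos θ)) := by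
    intro θ hθ
    have hs := Real.sin_pos_of_mem_Ioo hθ
    have : r ^ 2 - (m + r * Real.cos θ - m) ^ 2 = (r * Real.sin θ) ^ 2 := by
      have := Real.sin_sq_add_cos_sq θ
      linear_combination (-r ^ 2) * this
    simp only [hg, smul_eq_mul]
    rw [this, Real.sqrt_sq (by positivity), mul_neg, abs_neg, abs_of_pos (by positivity)]
    field_simp
  have hc : Continuous fun θ => (1 / Real.pi) *
      (f (m + r * Real.cos θ) * H (m + r * Real.cos θ)) :=
    continuous_const.mul (Continuous.mul (by fun_prop) hHc)
  rw [e0]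
  constructor
  · rw [integrable_indicator_iff measurableSet_Ioo, ← ang_image m r hr,
      integrableOn_image_iff_integrableOn_abs_deriv_smul measurableSet_Ioo hd hinj]
    refine (integrableOn_congr_fun e1 measurableSet_Ioo).2 ?_
    exact (hc.integrableOn_Icc).mono_set Ioo_subset_Icc_self
  · rw [integral_indicator measurableSet_Ioo, ← ang_image m r hr,
      integral_image_eq_integral_abs_deriv_smul measurableSet_Ioo hd hinj,
      setIntegral_congr_fun measurableSet_Ioo e1, ← integral_Ioc_eq_integral_Ioo,
      ← intervalIntegral.integral_of_le hpi.le, intervalIntegral.integral_const_mul,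
      ang_half (fun c => f (m + r * c) * H (m + r * c))
      (Continuous.mul (by fun_prop) hHc)]
    field_simp

lemma ang_measure_eq (m r : ℝ) (hr : 0 < r) (ω : Measure ℝ) [IsFiniteMeasure ω]
    (H : ℝ → ℝ) (hH : ContinuousOn H (Icc (m - r) (m + r)))
    (hH0 : ∀ x ∈ Icc (m - r) (m + r), 0 ≤ H x)
    (hF : ∀ f : ℝ → ℝ, Continuous f → 2 * Real.pi * ∫ t, f t ∂ω =
    ∫ θ in (0:ℝ)..(2 * Real.pi), f (m + r * Real.cos θ) * H (m + r * Real.cos θ)) :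
    ω = volume.withDensity (fun x => ENNReal.ofReal (angRho m r H x)) := by
  have hintg : Integrable (angRho m r H) := by
    simpa using (ang_rho_cv m r hr H (fun _ => 1) hH continuous_const).1
  have h0 : ∀ x, 0 ≤ angRho m r H x := by
    intro x
    refine indicator_nonneg (fun x hx => ?_) x
    have := hH0 x (Ioo_subset_Icc_self hx)
    have := Real.pi_pos
    positivity
  have : IsFiniteMeasure (volume.withDensity (fun x => ENNReal.ofReal (angRho m r H x))) :=
    isFiniteMeasure_withDensity_ofReal hintg.2
  refine ext_of_forall_integral_eq_of_IsFiniteMeasure fun f => ?_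
  rw [integral_withDensity_eq_integral_toReal_smul₀ hintg.aemeasurable.ennreal_ofReal
    (Eventually.of_forall fun x => ENNReal.ofReal_lt_top)]
  have e : ∀ x, (ENNReal.ofReal (angRho m r H x)).toReal • f x = f x * angRho m r H x := by
    intro x; rw [ENNReal.toReal_ofReal (h0 x), smul_eq_mul, mul_comm]
  simp_rw [e]
  rw [(ang_rho_cv m r hr H f hH f.continuous).2, ← hF f f.continuous]
  have := Real.pi_pos
  field_simp


lemma ang_dist (m r δ t x : ℝ) (h1 : r + δ ≤ |t - m|) (hx : |x - m| ≤ r) : δ ≤ |t - x| := by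
  have := abs_sub_abs_le_abs_sub (t - m) (x - m)
  rw [show t - m - (x - m) = t - x by ring] at this
  linarith

lemma ang_abs_mem (m r x : ℝ) (hx : x ∈ Icc (m - r) (m + r)) : |x - m| ≤ r :=
  abs_le.2 ⟨by linarith [hx.1], by linarith [hx.2]⟩

lemma angK_convex (m r δ t x y a b : ℝ) (hδ : 0 < δ) (ht : r + δ ≤ |t - m|)
    (hx : |x - m| ≤ r) (hy : |y - m| ≤ r) (ha : 0 ≤ a) (hb : 0 ≤ b) (hab : a + b = 1) :
    angK m r t (a * x + b * y) ≤ a * angK m r t x + b * angK m r t y := by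
  have hx' := ang_dist m r δ t x ht hx
  have hy' := ang_dist m r δ t y ht hy
  have e : |t - (a * x + b * y)| = a * |t - x| + b * |t - y| := by
    have e0 : t - (a * x + b * y) = a * (t - x) + b * (t - y) := by
      linear_combination (-t) * hab
    rw [e0]
    rw [abs_le] at hx hy
    rcases le_abs.1 ht with h | h
    · have p1 : 0 < t - x := by linarith
      have p2 : 0 < t - y := by linarith
      rw [abs_of_pos p1, abs_of_pos p2, abs_of_nonneg (by positivity)]
    · have p1 : t - x < 0 := by linarith
      have p2 : t - y < 0 := by linarith
      rw [abs_of_neg p1, abs_of_neg p2, abs_of_nonpos (by nlinarith)]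
      ring
  have hc := (convexOn_zpow (𝕜 := ℝ) (-1)).2 (mem_Ioi.2 (lt_of_lt_of_le hδ hx'))
    (mem_Ioi.2 (lt_of_lt_of_le hδ hy')) ha hb hab
  simp only [smul_eq_mul, zpow_neg_one] at hc
  unfold angK
  rw [e, div_eq_mul_inv, div_eq_mul_inv, div_eq_mul_inv]
  have := mul_le_mul_of_nonneg_left hc (Real.sqrt_nonneg ((t - m) ^ 2 - r ^ 2))
  linarith

lemma angK_integrable (m r δ R : ℝ) (hδ : 0 < δ) (σ : Measure ℝ)
    [IsFiniteMeasure σ] (hσ : ∀ᵐ t ∂σ, r + δ ≤ |t - m| ∧ |t - m| ≤ R) (x : ℝ)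
    (hx : x ∈ Icc (m - r) (m + r)) : Integrable (fun t => angK m r t x) σ := by
  refine Integrable.of_bound (C := R / δ) ?_ ?_
  · apply Measurable.aestronglyMeasurable
    unfold angK; fun_prop
  · filter_upwards [hσ] with t ht
    exact angK_bound m r δ R t x hδ ht.1 ht.2 (ang_abs_mem m r x hx)

lemma angH_concave (m r δ R : ℝ) (hδ : 0 < δ) (ω σ : Measure ℝ)
    [IsFiniteMeasure σ] (hσ : ∀ᵐ t ∂σ, r + δ ≤ |t - m| ∧ |t - m| ≤ R) :
    ConcaveOn ℝ (Icc (m - r) (m + r)) (angH m r ω σ) := by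
  refine ⟨convex_Icc _ _, ?_⟩
  intro x hx y hy a b ha hb hab
  have hz := (convex_Icc (m - r) (m + r)) hx hy ha hb hab
  simp only [smul_eq_mul] at hz ⊢
  have ix := angK_integrable m r δ R hδ σ hσ x hx
  have iy := angK_integrable m r δ R hδ σ hσ y hy
  have iz := angK_integrable m r δ R hδ σ hσ _ hz
  have : (∫ t, angK m r t (a * x + b * y) ∂σ) ≤
      a * (∫ t, angK m r t x ∂σ) + b * ∫ t, angK m r t y ∂σ := by
    rw [← integral_const_mul, ← integral_const_mul,
      ← integral_add (ix.const_mul a) (iy.const_mul b)]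
    refine integral_mono_ae iz ((ix.const_mul a).add (iy.const_mul b)) ?_
    filter_upwards [hσ] with t ht
    exact angK_convex m r δ t x y a b hδ ht.1 (ang_abs_mem m r x hx) (ang_abs_mem m r y hy) ha hb hab
  unfold angH
  have hb' : b = 1 - a := by linarith
  subst hb'
  linarith

lemma angH_deriv (m r δ R : ℝ) (hδ : 0 < δ) (ω σ : Measure ℝ)
    [IsFiniteMeasure σ] (hσ : ∀ᵐ t ∂σ, r + δ ≤ |t - m| ∧ |t - m| ≤ R) (x : ℝ)
    (hx : x ∈ Icc (m - r) (m + r)) : ∃ D, HasDerivAt (angH m r ω σ) D x := by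
  have hx' := ang_abs_mem m r x hx
  have hr : 0 ≤ r := (abs_nonneg _).trans hx'
  have hd : ∀ t, r + δ ≤ |t - m| → ∀ y ∈ Metric.ball x (δ / 2), δ / 2 ≤ |t - y| := by
    intro t ht y hy
    have h1 := ang_dist m r δ t x ht hx'
    rw [Metric.mem_ball, Real.dist_eq] at hy
    have := abs_sub_le t y x
    linarith
  have key := hasDerivAt_integral_of_dominated_loc_of_deriv_le (μ := σ) (𝕜 := ℝ)
    (F := fun y t => angK m r t y) (x₀ := x) (s := Metric.ball x (δ / 2))
    (F' := fun y t => Real.sqrt ((t - m) ^ 2 - r ^ 2) *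
      (((SignType.sign (t - y) : SignType) : ℝ) / |t - y| ^ 2))
    (bound := fun _ => R * (1 / (δ / 2) ^ 2))
    (Metric.ball_mem_nhds x (by positivity)) (Eventually.of_forall fun y => ?_)
    (angK_integrable m r δ R hδ σ hσ x hx) ?_ ?_ (integrable_const _) ?_
  · refine ⟨_, (key.2.const_mul (1 / 2)).const_sub (ω.real univ + σ.real univ / 2)⟩
  · apply Measurable.aestronglyMeasurable
    unfold angK; fun_prop
  · have e : (fun t : ℝ => Real.sqrt ((t - m) ^ 2 - r ^ 2) *
      (((SignType.sign (t - x) : SignType) : ℝ) / |t - x| ^ 2)) =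
      fun t => Real.sqrt ((t - m) ^ 2 - r ^ 2) * ((t - x) / |t - x| ^ 3) := by
      ext t
      rcases eq_or_ne (t - x) 0 with h | h
      · rw [h]; simp
      · have : ((SignType.sign (t - x) : SignType) : ℝ) * |t - x| = t - x := sign_mul_abs (t - x)
        have h2 : |t - x| ≠ 0 := abs_ne_zero.2 h
        nth_rewrite 3 [← this]
        field_simp
    rw [e]
    apply Measurable.aestronglyMeasurable
    fun_prop
  · filter_upwards [hσ] with t ht
    intro y hy
    have h1 := hd t ht.1 y hy
    rw [norm_mul, norm_div, Real.norm_of_nonneg (Real.sqrt_nonneg _), norm_pow, norm_abs_eq_norm,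
      Real.norm_eq_abs (t - y)]
    have h2 : ‖((SignType.sign (t - y) : SignType) : ℝ)‖ ≤ 1 := by
      cases SignType.sign (t - y) <;> simp
    have h3 : Real.sqrt ((t - m) ^ 2 - r ^ 2) ≤ R := by
      refine (Real.sqrt_le_sqrt (y := |t - m| ^ 2) ?_).trans ?_
      · rw [sq_abs]; nlinarith
      · rw [Real.sqrt_sq (abs_nonneg _)]; exact ht.2
    have hR : 0 ≤ R := (abs_nonneg _).trans ht.2
    gcongr
  · filter_upwards [hσ] with t ht
    intro y hy
    have h1 := hd t ht.1 y hy
    have h2 : t - y ≠ 0 := by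
      intro h; rw [h, abs_zero] at h1; linarith
    have h3 := ((hasDerivAt_abs h2).comp y ((hasDerivAt_id y).const_sub t)).inv (abs_ne_zero.2 h2)
    have h4 := h3.const_mul (Real.sqrt ((t - m) ^ 2 - r ^ 2))
    simp only [Function.comp_def] at h4
    rw [mul_neg, mul_one, neg_neg] at h4
    exact h4

lemma ang_conc_right (a b : ℝ) (H : ℝ → ℝ) (hc : ConcaveOn ℝ (Icc a b) H)
    (h0 : ∀ x ∈ Icc a b, 0 ≤ H x) (y x : ℝ) (hy : a ≤ y) (hyx : y ≤ x) (hx : x ≤ b) :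
    (b - x) * H y ≤ (b - y) * H x := by
  rcases eq_or_lt_of_le (hyx.trans hx) with h | h
  · have : x = y := le_antisymm (h ▸ hx) hyx
    rw [this]
  · have hb : 0 < b - y := by linarith
    have := hc.2 (⟨hy, h.le⟩ : y ∈ Icc a b) (⟨by linarith, le_rfl⟩ : b ∈ Icc a b)
      (div_nonneg (by linarith) hb.le : 0 ≤ (b - x) / (b - y))
      (div_nonneg (by linarith) hb.le : 0 ≤ (x - y) / (b - y)) (by field_simp; ring)
    simp only [smul_eq_mul] at this
    rw [show (b - x) / (b - y) * y + (x - y) / (b - y) * b = x by field_simp; ring] at this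
    have hb0 := h0 b ⟨by linarith, le_rfl⟩
    have h2 : 0 ≤ (x - y) / (b - y) * H b :=
      mul_nonneg (div_nonneg (by linarith) hb.le) hb0
    have h3 : (b - x) / (b - y) * H y ≤ H x := by linarith
    rw [div_mul_eq_mul_div, div_le_iff₀ hb] at h3
    linarith

lemma ang_conc_left (a b : ℝ) (H : ℝ → ℝ) (hc : ConcaveOn ℝ (Icc a b) H)
    (h0 : ∀ x ∈ Icc a b, 0 ≤ H x) (y x : ℝ) (hy : y ≤ b) (hyx : x ≤ y) (hx : a ≤ x) :
    (x - a) * H y ≤ (y - a) * H x := by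
  rcases eq_or_lt_of_le (hx.trans hyx) with h | h
  · have : x = y := le_antisymm hyx (h ▸ hx)
    rw [this]
  · have hb : 0 < y - a := by linarith
    have := hc.2 (⟨h.le, hy⟩ : y ∈ Icc a b) (⟨le_rfl, by linarith⟩ : a ∈ Icc a b)
      (div_nonneg (by linarith) hb.le : 0 ≤ (x - a) / (y - a))
      (div_nonneg (by linarith) hb.le : 0 ≤ (y - x) / (y - a)) (by field_simp; ring)
    simp only [smul_eq_mul] at this
    rw [show (x - a) / (y - a) * y + (y - x) / (y - a) * a = x by field_simp; ring] at this
    have hb0 := h0 a ⟨le_rfl, by linarith⟩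
    have h2 : 0 ≤ (y - x) / (y - a) * H a :=
      mul_nonneg (div_nonneg (by linarith) hb.le) hb0
    have h3 : (x - a) / (y - a) * H y ≤ H x := by linarith
    rw [div_mul_eq_mul_div, div_le_iff₀ hb] at h3
    linarith

lemma ang_conc_pos (a b : ℝ) (H : ℝ → ℝ) (hc : ConcaveOn ℝ (Icc a b) H)
    (h0 : ∀ x ∈ Icc a b, 0 ≤ H x) (hne : ∃ y ∈ Icc a b, H y ≠ 0) :
    ∀ x ∈ Ioo a b, 0 < H x := by
  obtain ⟨y, hy, hy0⟩ := hne
  have hyp : 0 < H y := lt_of_le_of_ne (h0 y hy) (Ne.symm hy0)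
  intro x hx
  rcases le_total y x with h | h
  · have := ang_conc_right a b H hc h0 y x hy.1 h hx.2.le
    have h2 : 0 < (b - x) * H y := mul_pos (by linarith [hx.2]) hyp
    have h3 : 0 < b - y := by linarith [hx.2]
    exact pos_of_mul_pos_right (h2.trans_le this) h3.le
  · have := ang_conc_left a b H hc h0 y x hy.2 h hx.1.le
    have h2 : 0 < (x - a) * H y := mul_pos (by linarith [hx.1]) hyp
    have h3 : 0 < y - a := by linarith [hx.1]
    exact pos_of_mul_pos_right (h2.trans_le this) h3.le

/-- endpoint dichotomy -/
lemma ang_end (l : Filter ℝ) [l.NeBot] (H ρ u w : ℝ → ℝ) (h w0 D k : ℝ) (hw0 : 0 < w0)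
    (hk : 0 < k) (hρ : ∀ᶠ x in l, ρ x = H x / (Real.pi * (Real.sqrt (u x) * Real.sqrt (w x))))
    (hu : ∀ᶠ x in l, 0 < u x) (hul : Tendsto u l (𝓝 0)) (hw : Tendsto w l (𝓝 w0))
    (hH : Tendsto H l (𝓝 h)) (hh : 0 ≤ h) (hkH : ∀ᶠ x in l, k * u x ≤ H x)
    (hD : Tendsto (fun x => (H x - h) / u x) l (𝓝 D)) :
    Xor' (∃ L : ℝ, 0 < L ∧ Tendsto (fun x => ρ x * Real.sqrt (u x)) l (𝓝 L))
      (∃ L : ℝ, 0 < L ∧ Tendsto (fun x => ρ x / Real.sqrt (u x)) l (𝓝 L)) := by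
  have hpi := Real.pi_pos
  have hsw : Tendsto (fun x => Real.pi * Real.sqrt (w x)) l (𝓝 (Real.pi * Real.sqrt w0)) :=
    (((Real.continuous_sqrt.tendsto w0).comp hw).const_mul _)
  have hsw0 : 0 < Real.pi * Real.sqrt w0 := by positivity
  have hwpos : ∀ᶠ x in l, 0 < w x := hw.eventually (lt_mem_nhds hw0)
  have t1 : Tendsto (fun x => ρ x * Real.sqrt (u x)) l (𝓝 (h / (Real.pi * Real.sqrt w0))) := by
    refine (hH.div hsw hsw0.ne').congr' ?_
    filter_upwards [hρ, hu, hwpos] with x h1 h2 h3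
    have := Real.sqrt_pos.2 h2
    have := Real.sqrt_pos.2 h3
    simp only [Pi.div_apply]
    rw [h1]; field_simp
  have excl : ∀ L, 0 < L → Tendsto (fun x => ρ x * Real.sqrt (u x)) l (𝓝 L) → ∀ L',
      Tendsto (fun x => ρ x / Real.sqrt (u x)) l (𝓝 L') → False := by
    intro L hL hT L' hT'
    have h2 : Tendsto (fun x => ρ x * Real.sqrt (u x)) l (𝓝 (L' * 0)) := by
      refine (hT'.mul hul).congr' ?_
      filter_upwards [hu] with x hx
      have h3 := Real.sqrt_pos.2 hx
      have h4 := Real.mul_self_sqrt hx.le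
      nth_rewrite 2 [← h4]
      field_simp
    have := tendsto_nhds_unique hT h2
    simp at this
    linarith
  rcases hh.eq_or_lt with h0 | hpos
  · subst h0
    simp only [sub_zero] at hD
    have hDk : k ≤ D := by
      refine ge_of_tendsto hD ?_
      filter_upwards [hkH, hu] with x h1 h2
      rw [le_div_iff₀ h2]; exact h1
    have t2 : Tendsto (fun x => ρ x / Real.sqrt (u x)) l (𝓝 (D / (Real.pi * Real.sqrt w0))) := by
      refine (hD.div hsw hsw0.ne').congr' ?_
      filter_upwards [hρ, hu, hwpos] with x h1 h2 h3
      have := Real.sqrt_pos.2 h2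
      have := Real.sqrt_pos.2 h3
      have h4 := Real.sq_sqrt h2.le
      simp only [Pi.div_apply]
      rw [h1]
      nth_rewrite 1 [← h4]
      field_simp
    have hp : 0 < D / (Real.pi * Real.sqrt w0) := div_pos (by linarith) hsw0
    refine Or.inr ⟨⟨_, hp, t2⟩, ?_⟩
    rintro ⟨L, hL, hT⟩
    exact excl L hL hT _ t2
  · have hp : 0 < h / (Real.pi * Real.sqrt w0) := div_pos hpos hsw0
    refine Or.inl ⟨⟨_, hp, t1⟩, ?_⟩
    rintro ⟨L, hL, hT⟩
    exact excl _ hp t1 L hT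

/-- Main single-interval statement. -/
lemma ang_single (m r δ R ℓ : ℝ) (hr : 0 < r) (hδ : 0 < δ) (ω σ : Measure ℝ) [IsFiniteMeasure ω]
    [IsFiniteMeasure σ] (hω : ∀ᵐ t ∂ω, |t - m| ≤ r)
    (hσ : ∀ᵐ t ∂σ, r + δ ≤ |t - m| ∧ |t - m| ≤ R) (hne : ω ≠ 0)
    (heq : ∀ x ∈ Icc (m - r) (m + r),
      2 * (∫ t, Real.log |x - t| ∂ω) + ∫ t, Real.log |x - t| ∂σ = ℓ) :
    ∃ ρ : ℝ → ℝ,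
      ω = volume.withDensity (fun x => ENNReal.ofReal (ρ x)) ∧
      (∀ x ∈ Set.Ioo (m - r) (m + r), 0 < ρ x) ∧
      Xor'
        (∃ L : ℝ, 0 < L ∧ Tendsto (fun x => ρ x * Real.sqrt (m + r - x))
          (𝓝[Set.Ioo (m - r) (m + r)] (m + r)) (𝓝 L))
        (∃ L : ℝ, 0 < L ∧ Tendsto (fun x => ρ x / Real.sqrt (m + r - x))
          (𝓝[Set.Ioo (m - r) (m + r)] (m + r)) (𝓝 L)) ∧
      Xor'
        (∃ L : ℝ, 0 < L ∧ Tendsto (fun x => ρ x * Real.sqrt (x - (m - r)))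
          (𝓝[Set.Ioo (m - r) (m + r)] (m - r)) (𝓝 L))
        (∃ L : ℝ, 0 < L ∧ Tendsto (fun x => ρ x / Real.sqrt (x - (m - r)))
          (𝓝[Set.Ioo (m - r) (m + r)] (m - r)) (𝓝 L)) := by
  have hpi := Real.pi_pos
  set H := angH m r ω σ with hHdef
  have hH : ContinuousOn H (Icc (m - r) (m + r)) := angH_continuousOn m r δ R hδ ω σ hσ
  have hT := ang_cheb m r δ R ℓ hr hδ ω σ hω hσ heq
  have hF := ang_cont m r hr ω hω H hH hT
  have hH0 := ang_nonneg m r hr ω H hH hF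
  have hmeas := ang_measure_eq m r hr ω H hH hH0 hF
  have hconc : ConcaveOn ℝ (Icc (m - r) (m + r)) H := angH_concave m r δ R hδ ω σ hσ
  have hex : ∃ y ∈ Icc (m - r) (m + r), H y ≠ 0 := by
    by_contra hcon
    push Not at hcon
    apply hne
    rw [hmeas]
    have : (fun x => ENNReal.ofReal (angRho m r H x)) = 0 := by
      ext x
      have : angRho m r H x = 0 := by
        unfold angRho
        rw [indicator_apply]
        split_ifs with hx
        · rw [hcon x (Ioo_subset_Icc_self hx)]; simp
        · rfl
      simp [this]
    rw [this, withDensity_zero]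
  have hpos := ang_conc_pos (m - r) (m + r) H hconc hH0 hex
  have hm : 0 < H m := hpos m ⟨by linarith, by linarith⟩
  have hρ : ∀ x ∈ Ioo (m - r) (m + r), angRho m r H x =
      H x / (Real.pi * (Real.sqrt (m + r - x) * Real.sqrt (x - (m - r)))) := by
    intro x hx
    unfold angRho
    rw [indicator_of_mem hx, ← Real.sqrt_mul (by linarith [hx.2])]
    congr 3
    ring_nf
  have hlt : m - r < m + r := by linarith
  have nb1 : (𝓝[Ioo (m - r) (m + r)] (m + r)).NeBot := by
    rw [← mem_closure_iff_nhdsWithin_neBot, closure_Ioo hlt.ne]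
    exact ⟨hlt.le, le_rfl⟩
  have nb2 : (𝓝[Ioo (m - r) (m + r)] (m - r)).NeBot := by
    rw [← mem_closure_iff_nhdsWithin_neBot, closure_Ioo hlt.ne]
    exact ⟨le_rfl, hlt.le⟩
  have hk : 0 < H m / r := div_pos hm hr
  refine ⟨angRho m r H, hmeas, ?_, ?_, ?_⟩
  · intro x hx
    rw [hρ x hx]
    have h1 : 0 < m + r - x := by linarith [hx.2]
    have h2 : 0 < x - (m - r) := by linarith [hx.1]
    have := hpos x hx
    positivity
  · have hmem : m + r ∈ Icc (m - r) (m + r) := ⟨hlt.le, le_rfl⟩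
    obtain ⟨D, hD⟩ := angH_deriv m r δ R hδ ω σ hσ (m + r) hmem
    have hc : Continuous fun x : ℝ => m + r - x := by fun_prop
    have hc2 : Continuous fun x : ℝ => x - (m - r) := by fun_prop
    refine ang_end _ H (angRho m r H) (fun x => m + r - x) (fun x => x - (m - r)) (H (m + r))
      (2 * r) (-D) (H m / r) (by linarith) hk ?_ ?_ ?_ ?_ ?_ (hH0 _ hmem) ?_ ?_
    · filter_upwards [self_mem_nhdsWithin] with x hx using hρ x hx
    · filter_upwards [self_mem_nhdsWithin] with x hx
      linarith [hx.2]
    · have := (hc.tendsto (m + r)).mono_left (nhdsWithin_le_nhds (s := Ioo (m - r) (m + r)))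
      simpa using this
    · have := (hc2.tendsto (m + r)).mono_left (nhdsWithin_le_nhds (s := Ioo (m - r) (m + r)))
      rwa [show m + r - (m - r) = 2 * r by ring] at this
    · exact (hH (m + r) hmem).mono_left (nhdsWithin_mono _ Ioo_subset_Icc_self)
    · filter_upwards [self_mem_nhdsWithin,
        mem_nhdsWithin_of_mem_nhds (lt_mem_nhds (show m < m + r by linarith))] with x hx hxm
      have := ang_conc_right (m - r) (m + r) H hconc hH0 m x (by linarith) hxm.le hx.2.le
      rw [div_mul_eq_mul_div, div_le_iff₀ hr]
      rw [show m + r - m = r by ring] at this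
      linarith
    · have h1 := (hasDerivAt_iff_tendsto_slope.1 hD).mono_left
        (nhdsWithin_mono (m + r) (s := Ioo (m - r) (m + r)) fun x hx => ne_of_lt hx.2)
      refine h1.neg.congr' ?_
      filter_upwards [self_mem_nhdsWithin] with x hx
      rw [slope_def_field, ← div_neg, neg_sub]
  · have hmem : m - r ∈ Icc (m - r) (m + r) := ⟨le_rfl, hlt.le⟩
    obtain ⟨D, hD⟩ := angH_deriv m r δ R hδ ω σ hσ (m - r) hmem
    have hc : Continuous fun x : ℝ => m + r - x := by fun_prop
    have hc2 : Continuous fun x : ℝ => x - (m - r) := by fun_prop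
    refine ang_end _ H (angRho m r H) (fun x => x - (m - r)) (fun x => m + r - x) (H (m - r))
      (2 * r) D (H m / r) (by linarith) hk ?_ ?_ ?_ ?_ ?_ (hH0 _ hmem) ?_ ?_
    · filter_upwards [self_mem_nhdsWithin] with x hx
      rw [hρ x hx, mul_comm (Real.sqrt (m + r - x))]
    · filter_upwards [self_mem_nhdsWithin] with x hx
      linarith [hx.1]
    · have := (hc2.tendsto (m - r)).mono_left (nhdsWithin_le_nhds (s := Ioo (m - r) (m + r)))
      simpa using this
    · have := (hc.tendsto (m - r)).mono_left (nhdsWithin_le_nhds (s := Ioo (m - r) (m + r)))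
      rwa [show m + r - (m - r) = 2 * r by ring] at this
    · exact (hH (m - r) hmem).mono_left (nhdsWithin_mono _ Ioo_subset_Icc_self)
    · filter_upwards [self_mem_nhdsWithin,
        mem_nhdsWithin_of_mem_nhds (gt_mem_nhds (show m - r < m by linarith))] with x hx hxm
      have := ang_conc_left (m - r) (m + r) H hconc hH0 m x (by linarith) hxm.le hx.1.le
      rw [div_mul_eq_mul_div, div_le_iff₀ hr]
      rw [show m - (m - r) = r by ring] at this
      linarith
    · have h1 := (hasDerivAt_iff_tendsto_slope.1 hD).mono_left
        (nhdsWithin_mono (m - r) (s := Ioo (m - r) (m + r)) fun x hx => ne_of_gt hx.1)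
      refine h1.congr' ?_
      filter_upwards [self_mem_nhdsWithin] with x hx
      rw [slope_def_field]


lemma ang_msupp_ae (μ : Measure ℝ) (a b : ℝ) (h : msupp μ = Icc a b) :
    ∀ᵐ t ∂μ, t ∈ Icc a b := by
  rw [← h]
  change μ (msupp μ)ᶜ = 0
  refine measure_null_of_locally_null _ fun x hx => ?_
  simp only [msupp, mem_compl_iff, mem_ofPred_eq, not_forall, not_lt] at hx
  obtain ⟨ε, hε, h0⟩ := hx
  exact ⟨_, mem_nhdsWithin_of_mem_nhds (Metric.ball_mem_nhds x hε), le_antisymm h0 bot_le⟩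


/-- Proposition 2.2: the components of the vector equilibrium measure of an
Angelesco system are absolutely continuous with non-vanishing density on the open support, and
at each endpoint the density has pure square-root behavior (blow-up or vanishing). -/
theorem vec_equilibrium_density_square_root_behavior
    (d : ℕ) (μ : Fin d → Measure ℝ) (lo hi : Fin d → ℝ)
    (hAng : Angelesco d μ lo hi)
    (c : Fin d → ℝ) (hc : ∀ i, c i ∈ Set.Ioo (0 : ℝ) 1) (hcsum : ∑ i, c i = 1)
    (A B : Fin d → ℝ) (ω : Fin d → Measure ℝ)
    (hEq : VecEquil d lo hi c ω A B) :
    ∀ i, ∃ ρ : ℝ → ℝ,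
      -- absolute continuity: `dω_{c,i} = ρ dx`
      ω i = volume.withDensity (fun x => ENNReal.ofReal (ρ x)) ∧
      -- non-vanishing of the density on `(α_{c,i}, β_{c,i})`
      (∀ x ∈ Set.Ioo (A i) (B i), 0 < ρ x) ∧
      -- square-root behavior at the right endpoint `β_{c,i}`: exactly one of the two limits
      -- `lim ρ(x) (β−x)^{1/2}` or `lim ρ(x) (β−x)^{−1/2}` exists, positive and finite
      Xor'
        (∃ L : ℝ, 0 < L ∧ Tendsto (fun x => ρ x * Real.sqrt (B i - x))
          (𝓝[Set.Ioo (A i) (B i)] (B i)) (𝓝 L))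
        (∃ L : ℝ, 0 < L ∧ Tendsto (fun x => ρ x / Real.sqrt (B i - x))
          (𝓝[Set.Ioo (A i) (B i)] (B i)) (𝓝 L)) ∧
      -- and the analogous claim at the left endpoint `α_{c,i}`
      Xor'
        (∃ L : ℝ, 0 < L ∧ Tendsto (fun x => ρ x * Real.sqrt (x - A i))
          (𝓝[Set.Ioo (A i) (B i)] (A i)) (𝓝 L))
        (∃ L : ℝ, 0 < L ∧ Tendsto (fun x => ρ x / Real.sqrt (x - A i))
          (𝓝[Set.Ioo (A i) (B i)] (A i)) (𝓝 L)) := by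
  intro i
  have hfin : ∀ j, IsFiniteMeasure (ω j) := fun j =>
    ⟨by rw [hEq.mass j]; exact ENNReal.ofReal_lt_top⟩
  have hae : ∀ j, ∀ᵐ t ∂(ω j), t ∈ Icc (A j) (B j) := fun j => ang_msupp_ae _ _ _ (hEq.supp j)
  have hne : Nonempty (Fin d) := ⟨i⟩
  obtain ⟨m, hm⟩ : ∃ m, m = (A i + B i) / 2 := ⟨_, rfl⟩
  obtain ⟨r, hr⟩ : ∃ r, r = (B i - A i) / 2 := ⟨_, rfl⟩
  have hA : A i = m - r := by rw [hm, hr]; ring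
  have hB : B i = m + r := by rw [hm, hr]; ring
  have hr0 : 0 < r := by rw [hr]; linarith [(hEq.endpoints i).2.1]
  -- separation
  obtain ⟨δ, hδ, hsep⟩ : ∃ δ > 0, ∀ j, j ≠ i → ∀ t ∈ Icc (A j) (B j), r + δ ≤ |t - m| := by
    obtain ⟨j0, hj0⟩ := Finite.exists_min
      (fun j => if j = i then (1 : ℝ) else max (A i - B j) (A j - B i))
    have hg : ∀ j, j ≠ i → 0 < max (A i - B j) (A j - B i) := by
      intro j hj
      rcases lt_or_gt_of_ne hj with h | h
      · have := hAng.sep j i h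
        exact lt_max_of_lt_left (by linarith [(hEq.endpoints j).2.2, (hEq.endpoints i).1])
      · have := hAng.sep i j h
        exact lt_max_of_lt_right (by linarith [(hEq.endpoints i).2.2, (hEq.endpoints j).1])
    obtain ⟨e, he⟩ : ∃ e, e = if j0 = i then (1 : ℝ) else max (A i - B j0) (A j0 - B i) :=
      ⟨_, rfl⟩
    refine ⟨e, ?_, fun j hj t ht => ?_⟩
    · rw [he]
      split_ifs with h
      · exact one_pos
      · exact hg j0 h
    · have h1 := hj0 j
      simp only [if_neg hj] at h1
      rw [← he] at h1
      rcases le_max_iff.1 h1 with h | h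
      · rw [hA] at h
        have := neg_le_abs (t - m)
        linarith [ht.2]
      · have := le_abs_self (t - m)
        rw [hB] at h
        linarith [ht.1]
  obtain ⟨R, hR⟩ : ∃ R, ∀ j, ∀ t ∈ Icc (A j) (B j), |t - m| ≤ R := by
    obtain ⟨j0, hj0⟩ := Finite.exists_max (fun j => |A j - m| + |B j - m|)
    refine ⟨_, fun j t ht => le_trans ?_ (hj0 j)⟩
    rw [abs_le]
    have h1 := neg_abs_le (A j - m)
    have h2 := le_abs_self (B j - m)
    have h3 := abs_nonneg (A j - m)
    have h4 := abs_nonneg (B j - m)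
    exact ⟨by linarith [ht.1], by linarith [ht.2]⟩
  obtain ⟨σ, hσdef⟩ : ∃ σ : Measure ℝ, σ = ∑ j ∈ Finset.univ.erase i, ω j := ⟨_, rfl⟩
  have hσfin : IsFiniteMeasure σ := by
    refine ⟨?_⟩
    rw [hσdef, Measure.coe_finsetSum, Finset.sum_apply]
    exact ENNReal.sum_lt_top.2 fun j _ => measure_lt_top (ω j) univ
  have hσ : ∀ᵐ t ∂σ, r + δ ≤ |t - m| ∧ |t - m| ≤ R := by
    rw [hσdef, ae_finsetSum_measure_iff]
    intro j hj
    filter_upwards [hae j] with t ht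
    exact ⟨hsep j (Finset.ne_of_mem_erase hj) t ht, hR j t ht⟩
  have hω : ∀ᵐ t ∂(ω i), |t - m| ≤ r := by
    filter_upwards [hae i] with t ht
    rw [hA, hB] at ht
    exact ang_abs_mem m r t ht
  have hω0 : ω i ≠ 0 := by
    intro h0
    have h1 := hEq.mass i
    rw [h0] at h1
    simp only [Measure.coe_zero, Pi.zero_apply] at h1
    have := ENNReal.ofReal_pos.2 (hc i).1
    rw [← h1] at this
    exact lt_irrefl _ this
  obtain ⟨ℓ, hℓ, -⟩ := hEq.equil i
  have heq : ∀ x ∈ Icc (m - r) (m + r),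
      2 * (∫ t, Real.log |x - t| ∂(ω i)) + ∫ t, Real.log |x - t| ∂σ = -ℓ := by
    intro x hx
    have hx' := ang_abs_mem m r x hx
    have hintg : ∀ j ∈ Finset.univ.erase i, Integrable (fun t => Real.log |x - t|) (ω j) := by
      intro j hj
      refine Integrable.of_bound (C := max |Real.log δ| |Real.log (R + r)|) ?_ ?_
      · apply Measurable.aestronglyMeasurable
        fun_prop
      · filter_upwards [hae j] with t ht
        have h1 := ang_dist m r δ t x (hsep j (Finset.ne_of_mem_erase hj) t ht) hx'
        have h2 : |t - x| ≤ R + r := by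
          have h3 := abs_sub_le t m x
          rw [abs_sub_comm m x] at h3
          linarith [hR j t ht]
        rw [abs_sub_comm x t]
        exact abs_le_max_abs_abs (Real.log_le_log hδ h1)
          (Real.log_le_log (lt_of_lt_of_le hδ h1) h2)
    rw [hσdef, integral_finsetSum_measure hintg]
    have h1 := hℓ x (by rw [hA, hB]; exact hx)
    rw [← Finset.add_sum_erase _ _ (Finset.mem_univ i)] at h1
    simp only [logPot, Finset.sum_neg_distrib] at h1
    linarith
  have key := ang_single m r δ R (-ℓ) hr0 hδ (ω i) σ hω hσ hω0 heq
  rw [hA, hB]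
  exact key

end
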